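/- There exists a universal constant d₀ ∈ ℕ such that the following holds for all r, d, t ∈ ℕ with d₀ ≤ d ≤ r and t ≥ 1. For all functions A, B : P_{r,2d} → [0,1], letting A' := S_{r,d}^t A and B' := S_{r,d}^t B (the t-fold iterate of S_{r,d}), one has |⟨A, T_{r,d} B⟩ − ⟨A', T_{r,d} B'⟩| ≤ 2dt/3^d. -/

import Mathlib

open scoped BigOperators

abbrev F3 := ZMod 3
abbrev Pt (r : ℕ) := Fin r → F3
abbrev Fn (r : ℕ) := Pt r → F3

/-- The set of functions `F₃^r → F₃` computed by polynomials of total degree at most `d`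
with individual degrees at most `2`. -/
def PolySet (r d : ℕ) : Set (Fn r) :=
  {g | ∃ P : MvPolynomial (Fin r) F3,
        P.totalDegree ≤ d ∧ (∀ i, P.degreeOf i ≤ 2) ∧
        ∀ x, g x = MvPolynomial.eval x P}

noncomputable def polyFinset (r d : ℕ) : Finset (Fn r) :=
  (Set.toFinite (PolySet r d)).toFinset

/-- Support size `|β|`. -/
def supp {r : ℕ} (β : Fn r) : ℕ := (Finset.univ.filter fun x => β x ≠ 0).card

/-- Dot product `⟨β, f⟩ = Σ_x β(x) f(x)` in `F₃`. -/
def dotF {r : ℕ} (β f : Fn r) : F3 := ∑ x, β x * f x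

noncomputable def ω : ℂ := Complex.exp (2 * (Real.pi : ℂ) * Complex.I / 3)

/-- The character `χ_β(f) = ω^{⟨β,f⟩}`. -/
noncomputable def chi {r : ℕ} (β f : Fn r) : ℂ := ω ^ (dotF β f).val

/-- The dual `S^⊥` of a set of functions. -/
def dualSet (r : ℕ) (S : Set (Fn r)) : Set (Fn r) := {g | ∀ h ∈ S, dotF g h = 0}

/-- `Λ` contains exactly one representative, of minimal support size, from each coset
of `𝔉_r` modulo `P_{r,d}^⊥`. -/
def IsMinRepSet (r d : ℕ) (Λ : Finset (Fn r)) : Prop :=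
  (∀ β : Fn r, ∃! β', β' ∈ Λ ∧ β - β' ∈ dualSet r (PolySet r d)) ∧
  (∀ β' ∈ Λ, ∀ γ : Fn r, β' - γ ∈ dualSet r (PolySet r d) → supp β' ≤ supp γ)

/-- The noise `a·(p² + 1)` (pointwise). -/
def shift {r : ℕ} (p : Fn r) (a : F3) : Fn r := fun x => a * (p x ^ 2 + 1)

/-- Fourier coefficient `Â(β)` of a function on `P_{r,d}`. -/
noncomputable def fourierP (r d : ℕ) (A : Fn r → ℂ) (β : Fn r) : ℂ :=
  (∑ g ∈ polyFinset r d, A g * (starRingEnd ℂ) (chi β g)) / ((polyFinset r d).card : ℂ)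

/-- Expectation `E_{f ∈ P_{r,d}}[A(f)]`. -/
noncomputable def expP (r d : ℕ) (A : Fn r → ℝ) : ℝ :=
  (∑ f ∈ polyFinset r d, A f) / ((polyFinset r d).card : ℝ)

/-- Degree-`k` influence `Inf_x^{≤k}(A)` with respect to a set `Λ` of minimal-support
coset representatives. -/
noncomputable def infP (r d k : ℕ) (Λ : Finset (Fn r)) (A : Fn r → ℝ) (x : Pt r) : ℝ :=
  ∑ β ∈ Λ.filter (fun β => β x ≠ 0 ∧ supp β ≤ k),
    ‖fourierP r d (fun g => (A g : ℂ)) β‖ ^ 2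

open scoped Classical

/-- Tuples of `d` linearly independent vectors in `F₃^r`. -/
noncomputable def LIset (r d : ℕ) : Finset (Fin d → Pt r) :=
  Finset.univ.filter fun v : Fin d → Pt r => LinearIndependent F3 v

/-- The function `x ↦ Π_i (ℓ_i(x) − 1)(ℓ_i(x) − 2)` where `ℓ_i(x) = ⟨v_i, x⟩ + c_i`. -/
def ellProd {r d : ℕ} (v : Fin d → Pt r) (c : Fin d → F3) : Fn r :=
  fun x => ∏ i, ((∑ j, v i j * x j) + c i - 1) * ((∑ j, v i j * x j) + c i - 2)

/-- The Cayley operator `T_{r,d}`: `(T_{r,d}F)(f) = E_{p,a}[F(f + a(p²+1))]`. -/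
noncomputable def Trd (r d : ℕ) (F : Fn r → ℝ) : Fn r → ℝ := fun f =>
  (∑ p ∈ polyFinset r d, ∑ a ∈ ({1, 2} : Finset F3), F (f + shift p a)) /
    (((polyFinset r d).card : ℝ) * 2)

/-- The Cayley operator `S_{r,d}`:
`(S_{r,d}F)(f) = E_{v,c,a}[F(f + a·Π_i (ℓ_i−1)(ℓ_i−2))]`. -/
noncomputable def Sop (r d : ℕ) (F : Fn r → ℝ) : Fn r → ℝ := fun f =>
  (∑ v ∈ LIset r d, ∑ c : Fin d → F3, ∑ a : F3,
      F (f + fun x => a * ellProd v c x)) /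
    (((LIset r d).card : ℝ) * 3 ^ d * 3)

/-- Inner product `⟨F,G⟩ = E_{f ∈ P_{r,2d}}[F(f)·G(f)]`. -/
noncomputable def innerP (r d : ℕ) (F G : Fn r → ℝ) : ℝ :=
  (∑ f ∈ polyFinset r (2 * d), F f * G f) / ((polyFinset r (2 * d)).card : ℝ)

/-!
Every character of `P_{r,2d}` has the form `ψ ∘ φ` for a linear functional `φ`, and the translation
operators `T` and `S` are diagonal in the Fourier basis, so it suffices to bound
`|λ_T| * (1 - |λ_S| ^ (2t))` for each `φ`. Let `R` be the rank of the Hankel form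
`(p, q) ↦ φ (p * q)` on polynomial functions of degree at most `d`. The eigenvalue of `T` is a
quadratic Gauss sum, and Weyl differencing gives `|λ_T| ≤ 3 ^ (-R / 2)`. If `R` is at least
`2d - O(1)`, this is `O(3 ^ (-d))`. Otherwise a truncated Nullstellensatz shows that on polynomial
functions of degree at most `2d` the functional `φ` is a combination of evaluations at no more than
`R` points; the product `∏ i, (ℓ i - 1) * (ℓ i - 2)` vanishes outside an affine subspace, and for
fixed `v` exactly one `c` makes it nonzero at a given point, so `|λ_S| ≥ 1 - R / 3 ^ d`, while
`3 ^ (-R / 2) * R ≤ d`.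
-/

namespace ReedMuller

section Functions

variable {F σ : Type*} [CommRing F]

/-- The function `x ↦ ∏ i, x i ^ α i` computed by the monomial with exponent vector `α`. -/
def monomialFun (α : σ →₀ ℕ) : (σ → F) → F := fun x => α.prod fun i k => x i ^ k

lemma monomialFun_zero : (monomialFun 0 : (σ → F) → F) = 1 := by
  ext; simp [monomialFun]

lemma monomialFun_add (α β : σ →₀ ℕ) :
    (monomialFun (α + β) : (σ → F) → F) = monomialFun α * monomialFun β := by
  ext
  exact Finsupp.prod_add_index' (fun _ => pow_zero _) fun _ => pow_add _

lemma monomialFun_single (i : σ) (k : ℕ) :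
    (monomialFun (Finsupp.single i k) : (σ → F) → F) = Function.eval i ^ k := by
  ext x; simp [monomialFun]

lemma evalₗ_monomial (α : σ →₀ ℕ) (c : F) :
    MvPolynomial.evalₗ F σ (MvPolynomial.monomial α c) = c • monomialFun α := by
  ext x; simp [monomialFun, MvPolynomial.eval_monomial]

lemma exponent_induction {p : (σ →₀ ℕ) → Prop} (zero : p 0)
    (add_single : ∀ α i, p α → p (α + Finsupp.single i 1)) (α : σ →₀ ℕ) : p α := by
  induction h : α.degree generalizing α with
  | zero => rwa [(Finsupp.degree_eq_zero_iff α).1 h]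
  | succ n ih =>
    obtain ⟨i, hi⟩ : ∃ i, α i ≠ 0 := by
      contrapose! h
      simp [show α = 0 from Finsupp.ext h]
    obtain ⟨β, rfl⟩ : ∃ β, α = β + Finsupp.single i 1 :=
      ⟨α - Finsupp.single i 1, (tsub_add_cancel_of_le
        (Finsupp.single_le_iff.2 (Nat.one_le_iff_ne_zero.2 hi))).symm⟩
    exact add_single β i (ih β (by simpa using h))

variable (F σ) in
/-- The functions on `σ → F` computed by polynomials of total degree at most `d`: over a finite
field, the generalized Reed-Muller code of order `d`. -/
noncomputable def reedMuller (d : ℕ) : Submodule F ((σ → F) → F) :=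
  (MvPolynomial.restrictTotalDegree σ F d).map (MvPolynomial.evalₗ F σ)

lemma reedMuller_eq_span (d : ℕ) :
    reedMuller F σ d = Submodule.span F (monomialFun '' {α | α.degree ≤ d}) := by
  rw [reedMuller, MvPolynomial.restrictTotalDegree, MvPolynomial.restrictSupport_eq_span,
    Submodule.map_span, Set.image_image]
  congr! 2
  ext1 α; simp [evalₗ_monomial]

lemma monomialFun_mem_reedMuller {α : σ →₀ ℕ} {d : ℕ} (h : α.degree ≤ d) :
    monomialFun α ∈ reedMuller F σ d := by
  rw [reedMuller_eq_span]
  exact Submodule.subset_span ⟨α, h, rfl⟩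

lemma reedMuller_mono : Monotone (reedMuller F σ) := fun d e h => by
  rw [reedMuller_eq_span, reedMuller_eq_span]
  exact Submodule.span_mono (Set.image_mono fun _ hα => le_trans hα h)

lemma one_mem_reedMuller (d : ℕ) : (1 : (σ → F) → F) ∈ reedMuller F σ d := by
  rw [← monomialFun_zero]
  exact monomialFun_mem_reedMuller (by simp)

lemma const_mem_reedMuller (c : F) (d : ℕ) : Function.const (σ → F) c ∈ reedMuller F σ d := by
  convert (reedMuller F σ d).smul_mem c (one_mem_reedMuller d) using 1
  ext x; simp

lemma eval_mem_reedMuller (i : σ) : Function.eval i ∈ reedMuller F σ 1 := by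
  rw [← pow_one (Function.eval i), ← monomialFun_single]
  exact monomialFun_mem_reedMuller (by simp)

lemma mul_mem_reedMuller {f g : (σ → F) → F} {d e : ℕ} (hf : f ∈ reedMuller F σ d)
    (hg : g ∈ reedMuller F σ e) : f * g ∈ reedMuller F σ (d + e) := by
  obtain ⟨P, hP, rfl⟩ := hf
  obtain ⟨Q, hQ, rfl⟩ := hg
  rw [SetLike.mem_coe, MvPolynomial.mem_restrictTotalDegree] at hP hQ
  refine ⟨P * Q, ?_, by ext x; simp⟩
  rw [SetLike.mem_coe, MvPolynomial.mem_restrictTotalDegree]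
  exact (MvPolynomial.totalDegree_mul P Q).trans (add_le_add hP hQ)

lemma prod_mem_reedMuller {ι : Type*} (s : Finset ι) {f : ι → (σ → F) → F} {d : ℕ}
    (hf : ∀ i ∈ s, f i ∈ reedMuller F σ d) : ∏ i ∈ s, f i ∈ reedMuller F σ (s.card * d) := by
  induction s using Finset.induction_on with
  | empty => simpa using one_mem_reedMuller 0
  | insert a s ha ih =>
    rw [Finset.prod_insert ha, Finset.card_insert_of_notMem ha, Nat.succ_mul, add_comm]
    exact mul_mem_reedMuller (hf a (Finset.mem_insert_self a s))
      (ih fun i hi => hf i (Finset.mem_insert_of_mem hi))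

lemma pow_mem_reedMuller {f : (σ → F) → F} {d : ℕ} (hf : f ∈ reedMuller F σ d) (k : ℕ) :
    f ^ k ∈ reedMuller F σ (k * d) := by
  simpa using prod_mem_reedMuller (Finset.range k) fun _ _ => hf

instance [Finite σ] (d : ℕ) : Module.Finite F (reedMuller F σ d) := by
  rw [reedMuller_eq_span]
  exact Module.Finite.span_of_finite F ((Finsupp.finite_of_degree_le d).image _)

end Functions

section FiniteField

variable {F σ : Type*} [Field F] [Fintype F]

lemma exists_monomialFun_eq_of_card_le {α : σ →₀ ℕ} {i : σ} (hi : Fintype.card F ≤ α i) :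
    ∃ β : σ →₀ ℕ, β.degree < α.degree ∧ (monomialFun β : (σ → F) → F) = monomialFun α := by
  obtain ⟨γ, rfl⟩ : ∃ γ, α = γ + Finsupp.single i (Fintype.card F) :=
    ⟨α - Finsupp.single i (Fintype.card F),
      (tsub_add_cancel_of_le (Finsupp.single_le_iff.2 hi)).symm⟩
  refine ⟨γ + Finsupp.single i 1, ?_, ?_⟩
  · simpa using Fintype.one_lt_card
  · ext x
    simp [monomialFun_add, monomialFun_single, FiniteField.pow_card]

lemma exists_reduced_exponent (α : σ →₀ ℕ) : ∃ β : σ →₀ ℕ, β.degree ≤ α.degree ∧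
    (∀ i, β i < Fintype.card F) ∧ (monomialFun β : (σ → F) → F) = monomialFun α := by
  induction h : α.degree using Nat.strong_induction_on generalizing α with
  | _ n ih =>
    by_cases hα : ∀ i, α i < Fintype.card F
    · exact ⟨α, h.le, hα, rfl⟩
    · push Not at hα
      obtain ⟨i, hi⟩ := hα
      obtain ⟨β, hβ, hβα⟩ := exists_monomialFun_eq_of_card_le hi
      obtain ⟨γ, hγ, hγ', hγβ⟩ := ih _ (h ▸ hβ) β rfl
      exact ⟨γ, hγ.trans (h ▸ hβ.le), hγ', hγβ.trans hβα⟩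

lemma reedMuller_eq_map_inf_restrictDegree (d : ℕ) :
    reedMuller F σ d = (MvPolynomial.restrictTotalDegree σ F d ⊓
      MvPolynomial.restrictDegree σ F (Fintype.card F - 1)).map (MvPolynomial.evalₗ F σ) := by
  refine le_antisymm ?_ (Submodule.map_mono inf_le_left)
  rw [reedMuller_eq_span, Submodule.span_le]
  rintro _ ⟨α, hα, rfl⟩
  obtain ⟨β, hβ, hβq, hβα⟩ := exists_reduced_exponent (F := F) α
  refine ⟨MvPolynomial.monomial β 1, ⟨?_, ?_⟩, by rw [evalₗ_monomial, one_smul, hβα]⟩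
  · exact (MvPolynomial.monomial_mem_restrictSupport F).2 (Or.inl (hβ.trans hα))
  · exact (MvPolynomial.monomial_mem_restrictSupport F).2
      (Or.inl fun i => Nat.le_sub_one_of_lt (hβq i))

end FiniteField

lemma mem_polyFinset {r d : ℕ} {f : Fn r} :
    f ∈ polyFinset r d ↔ f ∈ reedMuller F3 (Fin r) d := by
  rw [polyFinset, Set.Finite.mem_toFinset, reedMuller_eq_map_inf_restrictDegree]
  simp only [PolySet, Set.mem_ofPred_eq, Submodule.mem_map, Submodule.mem_inf,
    MvPolynomial.mem_restrictTotalDegree, MvPolynomial.mem_restrictDegree,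
    MvPolynomial.degreeOf_le_iff, funext_iff, MvPolynomial.evalₗ_apply, ZMod.card]
  constructor <;> aesop

section Vanishing

open Module

variable {F X : Type*} [Field F]

variable (F) in
/-- The functions that vanish on the finite set `V` of points. -/
def vanishing (V : Finset X) : Submodule F (X → F) :=
  LinearMap.ker (LinearMap.funLeft F F (Subtype.val : V → X))

lemma mem_vanishing {V : Finset X} {f : X → F} : f ∈ vanishing F V ↔ ∀ x ∈ V, f x = 0 := by
  simp [vanishing, funext_iff, LinearMap.funLeft_apply]

lemma mul_mem_vanishing {V : Finset X} {f : X → F} (g : X → F) (hf : f ∈ vanishing F V) :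
    g * f ∈ vanishing F V :=
  mem_vanishing.2 fun x hx => by rw [Pi.mul_apply, mem_vanishing.1 hf x hx, mul_zero]

variable [Finite X]

lemma card_add_finrank_vanishing (V : Finset X) :
    V.card + finrank F (vanishing F V) = finrank F (X → F) := by
  have hsurj := LinearMap.funLeft_surjective_of_injective F F (Subtype.val : V → X)
    Subtype.val_injective
  rw [← LinearMap.finrank_range_add_finrank_ker (LinearMap.funLeft F F (Subtype.val : V → X)),
    LinearMap.range_eq_top.2 hsurj, finrank_top, finrank_fintype_fun_eq_card, Fintype.card_coe,
    vanishing]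

lemma finrank_le_card_add_finrank_inf_vanishing (N : Submodule F (X → F)) (V : Finset X) :
    finrank F N ≤ V.card + finrank F ↥(N ⊓ vanishing F V) := by
  have h := Submodule.finrank_sup_add_finrank_inf_eq N (vanishing F V)
  have hsup := Submodule.finrank_le (N ⊔ vanishing F V)
  have hV := card_add_finrank_vanishing (F := F) V
  omega

lemma card_add_finrank_inf_vanishing_of_sup_eq_top {N : Submodule F (X → F)} {V : Finset X}
    (hN : N ⊔ vanishing F V = ⊤) : V.card + finrank F ↥(N ⊓ vanishing F V) = finrank F N := by
  have h := Submodule.finrank_sup_add_finrank_inf_eq N (vanishing F V)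
  have hV := card_add_finrank_vanishing (F := F) V
  rw [hN, finrank_top] at h
  omega

end Vanishing

section Hankel

open Module

variable {F σ : Type*} [Field F]

/-- The Hankel form `(p, q) ↦ φ (p * q)` on polynomial functions of degrees at most `a` and `b`. -/
noncomputable def hankel (φ : Dual F ((σ → F) → F)) (a b : ℕ) :
    reedMuller F σ a →ₗ[F] Dual F (reedMuller F σ b) :=
  ((LinearMap.mul F ((σ → F) → F)).compr₂ φ).domRestrict₁₂ _ _

lemma hankel_apply (φ : Dual F ((σ → F) → F)) {a b : ℕ} (p : reedMuller F σ a)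
    (q : reedMuller F σ b) : hankel φ a b p q = φ (p * q) := rfl

/-- The rank of the Hankel form of `φ`. -/
noncomputable def hankelRank (φ : Dual F ((σ → F) → F)) (a b : ℕ) : ℕ :=
  finrank F (LinearMap.range (hankel φ a b))

/-- The left kernel of the Hankel form of `φ`. -/
noncomputable def hankelKer (φ : Dual F ((σ → F) → F)) (a b : ℕ) : Submodule F ((σ → F) → F) :=
  (LinearMap.ker (hankel φ a b)).map (reedMuller F σ a).subtype

variable {φ ψ : Dual F ((σ → F) → F)} {a a' b b' : ℕ}

lemma mem_hankelKer {p : (σ → F) → F} : p ∈ hankelKer φ a b ↔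
    p ∈ reedMuller F σ a ∧ ∀ q ∈ reedMuller F σ b, φ (p * q) = 0 := by
  simp [hankelKer, LinearMap.ext_iff, hankel_apply, and_comm]

lemma hankelKer_le_reedMuller : hankelKer φ a b ≤ reedMuller F σ a :=
  fun _ hp => (mem_hankelKer.1 hp).1

lemma hankelKer_anti (h : b ≤ b') : hankelKer φ a b' ≤ hankelKer φ a b := fun p hp => by
  rw [mem_hankelKer] at hp ⊢
  exact ⟨hp.1, fun q hq => hp.2 q (reedMuller_mono h hq)⟩

lemma hankelRank_neg (φ : Dual F ((σ → F) → F)) (a b : ℕ) :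
    hankelRank (-φ) a b = hankelRank φ a b := by
  have hneg : hankel (-φ) a b = -hankel φ a b := rfl
  rw [hankelRank, hankelRank, hneg, LinearMap.range_neg]

/-- A truncation in degree `a` of an ideal: multiplication by coordinate functions preserves it as
long as degrees stay at most `a`. -/
structure IsTruncatedIdeal (K : Submodule F ((σ → F) → F)) (a : ℕ) : Prop where
  le : K ≤ reedMuller F σ a
  eval_mul_mem {p : (σ → F) → F} {n : ℕ} (i : σ) (hp : p ∈ K) (hpn : p ∈ reedMuller F σ n)
    (hn : n + 1 ≤ a) : Function.eval i * p ∈ K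

lemma IsTruncatedIdeal.mul_mem {K : Submodule F ((σ → F) → F)} (hK : IsTruncatedIdeal K a)
    {p q : (σ → F) → F} {m n : ℕ} (hq : q ∈ reedMuller F σ m) (hp : p ∈ K)
    (hpn : p ∈ reedMuller F σ n) (hmn : m + n ≤ a) : q * p ∈ K := by
  have hmon : ∀ α : σ →₀ ℕ, α.degree + n ≤ a → monomialFun α * p ∈ K := by
    intro α
    induction α using exponent_induction with
    | zero => exact fun _ => by rwa [monomialFun_zero, one_mul]
    | add_single α i ih =>
      intro hα
      rw [map_add, Finsupp.degree_single] at hα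
      rw [monomialFun_add, monomialFun_single, pow_one, mul_right_comm, mul_comm]
      exact hK.eval_mul_mem i (ih (by omega))
        (mul_mem_reedMuller (monomialFun_mem_reedMuller le_rfl) hpn) (by omega)
  suffices reedMuller F σ m ≤ K.comap (LinearMap.mulRight F p) from this hq
  rw [reedMuller_eq_span, Submodule.span_le]
  rintro _ ⟨α, hα, rfl⟩
  exact hmon α ((Nat.add_le_add_right hα n).trans hmn)

variable [Finite σ]

lemma hankelRank_add_finrank_hankelKer (φ : Dual F ((σ → F) → F)) (a b : ℕ) :
    hankelRank φ a b + finrank F (hankelKer φ a b) = finrank F (reedMuller F σ a) := by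
  rw [hankelRank, hankelKer, Submodule.finrank_map_subtype_eq,
    LinearMap.finrank_range_add_finrank_ker]

lemma hankelRank_comm (φ : Dual F ((σ → F) → F)) (a b : ℕ) :
    hankelRank φ a b = hankelRank φ b a := by
  have hflip : hankel φ b a =
      (hankel φ a b).dualMap ∘ₗ (evalEquiv F (reedMuller F σ b)).toLinearMap := by
    ext q p
    simp [hankel_apply, mul_comm]
  rw [hankelRank, hankelRank, hflip, LinearMap.range_comp_of_range_eq_top _ (LinearEquiv.range _),
    LinearMap.finrank_range_dualMap_eq_finrank_range]

lemma hankelRank_mono_right (φ : Dual F ((σ → F) → F)) (a : ℕ) (h : b ≤ b') :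
    hankelRank φ a b ≤ hankelRank φ a b' := by
  have hb := hankelRank_add_finrank_hankelKer φ a b
  have hb' := hankelRank_add_finrank_hankelKer φ a b'
  have : FiniteDimensional F (hankelKer φ a b) :=
    Submodule.finiteDimensional_of_le hankelKer_le_reedMuller
  have hker := Submodule.finrank_mono (hankelKer_anti (φ := φ) (a := a) h)
  omega

lemma hankelRank_mono (φ : Dual F ((σ → F) → F)) (ha : a ≤ a') (hb : b ≤ b') :
    hankelRank φ a b ≤ hankelRank φ a' b' :=
  (hankelRank_mono_right φ a hb).trans <| by
    simpa only [hankelRank_comm φ _ b'] using hankelRank_mono_right φ b' ha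

lemma hankelRank_add_le (φ ψ : Dual F ((σ → F) → F)) (a b : ℕ) :
    hankelRank (φ + ψ) a b ≤ hankelRank φ a b + hankelRank ψ a b :=
  have hadd : hankel (φ + ψ) a b = hankel φ a b + hankel ψ a b := rfl
  calc hankelRank (φ + ψ) a b
      ≤ finrank F ↥(LinearMap.range (hankel φ a b) ⊔ LinearMap.range (hankel ψ a b)) := by
        rw [hankelRank, hadd]
        exact Submodule.finrank_mono (LinearMap.range_add_le _ _)
    _ ≤ hankelRank φ a b + hankelRank ψ a b :=
        Submodule.finrank_add_le_finrank_add_finrank _ _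

lemma hankelRank_le_card [Finite F] {V : Finset (σ → F)}
    (hφ : φ ∈ (vanishing F V).dualAnnihilator) (a b : ℕ) : hankelRank φ a b ≤ V.card := by
  have hV := finrank_le_card_add_finrank_inf_vanishing (reedMuller F σ a) V
  have hker : reedMuller F σ a ⊓ vanishing F V ≤ hankelKer φ a b := fun p hp =>
    mem_hankelKer.2 ⟨hp.1, fun q _ => (Submodule.mem_dualAnnihilator φ).1 hφ _
      (mul_comm p q ▸ mul_mem_vanishing q hp.2)⟩
  have hle := Submodule.finrank_mono hker
  have hrank := hankelRank_add_finrank_hankelKer φ a b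
  omega

lemma isTruncatedIdeal_hankelKer (h : hankelRank φ a b = hankelRank φ a (b + 1)) :
    IsTruncatedIdeal (hankelKer φ a b) a where
  le := hankelKer_le_reedMuller
  eval_mul_mem {p n} i hp hpn hn := by
    have hb := hankelRank_add_finrank_hankelKer φ a b
    have hb' := hankelRank_add_finrank_hankelKer φ a (b + 1)
    have : FiniteDimensional F (hankelKer φ a b) :=
      Submodule.finiteDimensional_of_le hankelKer_le_reedMuller
    have hker : hankelKer φ a (b + 1) = hankelKer φ a b :=
      Submodule.eq_of_le_of_finrank_eq (hankelKer_anti b.le_succ) (by omega)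
    rw [← hker, mem_hankelKer] at hp
    refine mem_hankelKer.2 ⟨reedMuller_mono hn ?_, fun q hq => ?_⟩
    · exact add_comm 1 n ▸ mul_mem_reedMuller (eval_mem_reedMuller i) hpn
    · rw [mul_comm (Function.eval i), mul_assoc]
      exact hp.2 _ (add_comm 1 b ▸ mul_mem_reedMuller (eval_mem_reedMuller i) hq)

end Hankel

section LeadingMonomials

open Module

variable {F σ : Type*} [Field F] [LinearOrder σ]

/-- The span of the monomials below `x ^ α` in the degree-lexicographic order. -/
noncomputable def lowerSpan (F : Type*) [Field F] (α : σ →₀ ℕ) : Submodule F ((σ → F) → F) :=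
  Submodule.span F (monomialFun '' {β | toDegLex β < toDegLex α})

lemma lowerSpan_le_reedMuller (α : σ →₀ ℕ) : lowerSpan F α ≤ reedMuller F σ α.degree := by
  rw [lowerSpan, reedMuller_eq_span]
  exact Submodule.span_mono (Set.image_mono fun β hβ =>
    Finsupp.DegLex.monotone_degree (le_of_lt hβ))

lemma monomialFun_mul_mem_lowerSpan {α : σ →₀ ℕ} (γ : σ →₀ ℕ) {f : (σ → F) → F}
    (hf : f ∈ lowerSpan F α) : monomialFun γ * f ∈ lowerSpan F (γ + α) := by
  suffices lowerSpan F α ≤ (lowerSpan F (γ + α)).comap (LinearMap.mulLeft F (monomialFun γ)) from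
    this hf
  rw [lowerSpan, Submodule.span_le]
  rintro _ ⟨β, hβ, rfl⟩
  refine Submodule.subset_span ⟨γ + β, ?_, monomialFun_add γ β⟩
  exact add_lt_add_right (show toDegLex β < toDegLex α from hβ) (toDegLex γ)

lemma card_add_finrank_le_finrank_span_sup {K : Submodule F ((σ → F) → F)}
    [FiniteDimensional F K] (U : Finset (σ →₀ ℕ))
    (hU : ∀ u ∈ U, monomialFun u ∉ lowerSpan F u ⊔ K) :
    U.card + finrank F K ≤
      finrank F ↥(Submodule.span F (monomialFun '' (U : Set (σ →₀ ℕ))) ⊔ K) := by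
  have hfin (U : Finset (σ →₀ ℕ)) :
      FiniteDimensional F (Submodule.span F (monomialFun (F := F) '' (U : Set (σ →₀ ℕ)))) :=
    FiniteDimensional.span_of_finite F (U.finite_toSet.image _)
  revert hU
  refine Finset.induction_on_max_value toDegLex U (fun _ => ?_) fun u U hu hmax ih hU => ?_
  · rw [Finset.card_empty, zero_add, Finset.coe_empty, Set.image_empty, Submodule.span_empty,
      bot_sup_eq]
  · have hlt (v) (hv : v ∈ U) : toDegLex v < toDegLex u :=
      lt_of_le_of_ne (hmax v hv) fun h => hu (toDegLex_injective h ▸ hv)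
    have hspan : Submodule.span F (monomialFun '' (U : Set (σ →₀ ℕ))) ⊔ K ≤ lowerSpan F u ⊔ K :=
      sup_le_sup_right (Submodule.span_mono (Set.image_mono hlt)) K
    have hstep : Submodule.span F (monomialFun '' (U : Set (σ →₀ ℕ))) ⊔ K <
        Submodule.span F (monomialFun '' (insert u U : Finset (σ →₀ ℕ))) ⊔ K := by
      refine SetLike.lt_iff_le_and_exists.2 ⟨?_, monomialFun u, ?_, ?_⟩
      · exact sup_le_sup_right (Submodule.span_mono (Set.image_mono (by simp))) K
      · exact Submodule.mem_sup_left (Submodule.subset_span ⟨u, by simp, rfl⟩)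
      · exact fun h => hU u (Finset.mem_insert_self u U) (hspan h)
    have hfinrank := Submodule.finrank_lt_finrank_of_lt hstep
    have ih' := ih fun v hv => hU v (Finset.mem_insert_of_mem hv)
    rw [Finset.card_insert_of_notMem hu]
    omega

lemma card_add_finrank_le {K W : Submodule F ((σ → F) → F)} [FiniteDimensional F W] (hK : K ≤ W)
    {U : Finset (σ →₀ ℕ)} (hUW : ∀ u ∈ U, monomialFun u ∈ W)
    (hU : ∀ u ∈ U, monomialFun u ∉ lowerSpan F u ⊔ K) :
    U.card + finrank F K ≤ finrank F W := by
  have : FiniteDimensional F K := Submodule.finiteDimensional_of_le hK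
  refine (card_add_finrank_le_finrank_span_sup U hU).trans (Submodule.finrank_mono (sup_le ?_ hK))
  rw [Submodule.span_le]
  rintro _ ⟨u, hu, rfl⟩
  exact hUW u hu

lemma exists_minimal_monomial [Finite σ] [Fintype F] {N : Submodule F ((σ → F) → F)} {e : ℕ}
    (he : reedMuller F σ e ≤ N) (hN : ¬ reedMuller F σ (e + 1) ≤ N) :
    ∃ α : σ →₀ ℕ, α.degree = e + 1 ∧ (∀ i, α i < Fintype.card F) ∧
      lowerSpan F α ≤ N ∧ monomialFun α ∉ N := by
  obtain ⟨β, hβ, hβN⟩ : ∃ β : σ →₀ ℕ, β.degree ≤ e + 1 ∧ monomialFun β ∉ N := by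
    contrapose! hN
    rw [reedMuller_eq_span, Submodule.span_le]
    rintro _ ⟨β, hβ, rfl⟩
    exact hN β hβ
  obtain ⟨α, hαN, hmin⟩ := WellFounded.has_min
    (InvImage.wf toDegLex (wellFounded_lt (α := DegLex (σ →₀ ℕ))))
    {α : σ →₀ ℕ | monomialFun α ∉ N} ⟨β, hβN⟩
  have hmin' : ∀ γ : σ →₀ ℕ, toDegLex γ < toDegLex α → monomialFun γ ∈ N := fun γ hγ => by
    by_contra hγN
    exact hmin γ hγN hγ
  have hαβ : α.degree ≤ β.degree := Finsupp.DegLex.monotone_degree (not_lt.1 (hmin β hβN))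
  refine ⟨α, ?_, fun i => ?_, ?_, hαN⟩
  · by_contra hα
    exact hαN (he (monomialFun_mem_reedMuller (by omega)))
  · by_contra! hi
    obtain ⟨γ, hγ, hγα⟩ := exists_monomialFun_eq_of_card_le (F := F) hi
    exact hαN (hγα ▸ hmin' γ (Finsupp.DegLex.lt_iff.2 (Or.inl hγ)))
  · rw [lowerSpan, Submodule.span_le]
    rintro _ ⟨γ, hγ, rfl⟩
    exact hmin' γ hγ

lemma monomialFun_notMem_lowerSpan_sup {K N : Submodule F ((σ → F) → F)} {u α : σ →₀ ℕ}
    (hu : u ≤ α) (hαN : monomialFun α ∉ N) (hα : lowerSpan F α ≤ N)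
    (hK : ∀ k ∈ K, k ∈ reedMuller F σ u.degree → monomialFun (α - u) * k ∈ N) :
    monomialFun u ∉ lowerSpan F u ⊔ K := by
  intro hmem
  obtain ⟨s, hs, k, hk, hsk⟩ := Submodule.mem_sup.1 hmem
  have hku : k ∈ reedMuller F σ u.degree := by
    rw [← add_sub_cancel_left s k, hsk]
    exact Submodule.sub_mem _ (monomialFun_mem_reedMuller le_rfl) (lowerSpan_le_reedMuller u hs)
  have hs' := monomialFun_mul_mem_lowerSpan (α - u) hs
  rw [tsub_add_cancel_of_le hu] at hs'
  apply hαN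
  rw [← tsub_add_cancel_of_le hu, monomialFun_add, ← hsk, mul_add]
  exact N.add_mem (hα hs') (hK k hk hku)

end LeadingMonomials

section SquarefreeExponent

variable {σ : Type*}

/-- The exponent vector of the squarefree monomial `∏ i ∈ T, x i`. -/
noncomputable def squarefreeExponent (T : Finset σ) : σ →₀ ℕ := Multiset.toFinsupp T.val

lemma squarefreeExponent_injective : Function.Injective (squarefreeExponent (σ := σ)) :=
  Multiset.toFinsupp.injective.comp Finset.val_injective

lemma degree_squarefreeExponent (T : Finset σ) : (squarefreeExponent T).degree = T.card := by
  simp [squarefreeExponent, Finsupp.degree_apply]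

lemma squarefreeExponent_le_iff {T : Finset σ} {α : σ →₀ ℕ} :
    squarefreeExponent T ≤ α ↔ T ⊆ α.support := by
  simp only [Finsupp.le_def, squarefreeExponent, Multiset.toFinsupp_apply, Finset.subset_iff,
    Finsupp.mem_support_iff]
  refine forall_congr' fun i => ?_
  by_cases hi : i ∈ T
  · simp [hi, Multiset.count_eq_one_of_mem T.nodup hi, Nat.one_le_iff_ne_zero]
  · simp [hi, Multiset.count_eq_zero_of_notMem]

lemma squarefreeExponent_mono : Monotone (squarefreeExponent (σ := σ)) := fun S T h =>
  squarefreeExponent_le_iff.2 (by simpa [squarefreeExponent] using h)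

lemma degree_le_mul_card_support {α : σ →₀ ℕ} {q : ℕ} (hα : ∀ i, α i < q) :
    α.degree ≤ (q - 1) * α.support.card := by
  rw [Finsupp.degree_apply, mul_comm]
  exact Finset.sum_le_card_nsmul _ _ _ fun i _ => Nat.le_sub_one_of_lt (hα i)

end SquarefreeExponent

section CountingMonomials

open Module

variable {F σ : Type*} [Field F] [LinearOrder σ]

lemma choose_add_finrank_le [Finite σ] {K N : Submodule F ((σ → F) → F)} {a m : ℕ} {T : Finset σ}
    {w α : σ →₀ ℕ} (hK : K ≤ reedMuller F σ a) (hw : w.degree + m ≤ a)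
    (hT : w + squarefreeExponent T ≤ α) (hα : lowerSpan F α ≤ N) (hαN : monomialFun α ∉ N)
    (hKN : ∀ k ∈ K, k ∈ reedMuller F σ (w.degree + m) →
      ∀ γ : σ →₀ ℕ, γ.degree + (w.degree + m) = α.degree → monomialFun γ * k ∈ N) :
    T.card.choose m + finrank F K ≤ finrank F (reedMuller F σ a) := by
  have hdeg (S) (hS : S ∈ T.powersetCard m) :
      (w + squarefreeExponent S).degree = w.degree + m := by
    rw [map_add, degree_squarefreeExponent, (Finset.mem_powersetCard.1 hS).2]
  have hinj : Function.Injective fun S : Finset σ => w + squarefreeExponent S :=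
    (add_right_injective w).comp squarefreeExponent_injective
  rw [← Finset.card_powersetCard, ← Finset.card_image_of_injective _ hinj]
  refine card_add_finrank_le hK ?_ ?_
  · rw [Finset.forall_mem_image]
    exact fun S hS => monomialFun_mem_reedMuller ((hdeg S hS).trans_le hw)
  · rw [Finset.forall_mem_image]
    intro S hS
    have hSα : w + squarefreeExponent S ≤ α :=
      (add_le_add_right (squarefreeExponent_mono (Finset.mem_powersetCard.1 hS).1) w).trans hT
    refine monomialFun_notMem_lowerSpan_sup hSα hαN hα fun k hk hkS =>
      hKN k hk (hdeg S hS ▸ hkS) _ ?_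
    rw [← hdeg S hS, ← map_add, tsub_add_cancel_of_le hSα]

variable [Fintype F] [Finite σ]

lemma IsTruncatedIdeal.reedMuller_succ_le_sup {K : Submodule F ((σ → F) → F)} {a e m : ℕ}
    (hK : IsTruncatedIdeal K a) (he : e + 1 ≤ a)
    (hm : finrank F (reedMuller F σ a) < (e / (Fintype.card F - 1)).choose m + finrank F K) :
    reedMuller F σ (e + 1) ≤ reedMuller F σ e ⊔ K := by
  by_contra hN
  obtain ⟨α, hα, hαq, hlow, hαN⟩ := exists_minimal_monomial le_sup_left hN
  have hcard : e / (Fintype.card F - 1) ≤ α.support.card :=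
    Nat.div_le_of_le_mul (by have := degree_le_mul_card_support hαq; omega)
  have hme : m ≤ e + 1 := by
    by_contra! h
    have hlt : e / (Fintype.card F - 1) < m := (Nat.div_le_self _ _).trans_lt (by omega)
    have := Submodule.finrank_mono hK.le
    rw [Nat.choose_eq_zero_of_lt hlt] at hm
    omega
  have hcount : α.support.card.choose m + finrank F K ≤ finrank F (reedMuller F σ a) := by
    refine choose_add_finrank_le (w := 0) hK.le (by simp; omega) ?_ hlow hαN ?_
    · rw [zero_add, squarefreeExponent_le_iff]
    · intro k hk hkm γ hγ
      exact Submodule.mem_sup_right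
        (hK.mul_mem (monomialFun_mem_reedMuller le_rfl) hk hkm (by omega))
  have := Nat.choose_le_choose m hcard
  omega

lemma IsTruncatedIdeal.reedMuller_le_sup {K : Submodule F ((σ → F) → F)} {a e m : ℕ}
    (hK : IsTruncatedIdeal K a)
    (hm : finrank F (reedMuller F σ a) < (e / (Fintype.card F - 1)).choose m + finrank F K) :
    reedMuller F σ a ≤ reedMuller F σ e ⊔ K := by
  suffices ∀ j ≤ a, reedMuller F σ j ≤ reedMuller F σ e ⊔ K from this a le_rfl
  intro j
  induction j with
  | zero => exact fun _ => (reedMuller_mono (Nat.zero_le e)).trans le_sup_left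
  | succ j ih =>
    intro hj
    obtain hje | hje := le_or_gt (j + 1) e
    · exact (reedMuller_mono hje).trans le_sup_left
    · have hchoose : (e / (Fintype.card F - 1)).choose m ≤ (j / (Fintype.card F - 1)).choose m :=
        Nat.choose_le_choose m (Nat.div_le_div_right (by omega))
      exact (hK.reedMuller_succ_le_sup (m := m) hj (by omega)).trans
        (sup_le (ih (by omega)) le_sup_right)

lemma choose_le_hankelRank {φ : Dual F ((σ → F) → F)} {D b b' m t : ℕ}
    (hD : reedMuller F σ D ≤ LinearMap.ker φ) (hD' : ¬ reedMuller F σ (D + 1) ≤ LinearMap.ker φ)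
    (hb : b + b' = D + 1) (hm : m ≤ b) (ht : t ≤ b') (htq : (Fintype.card F - 1) * t ≤ D + 1) :
    t.choose m ≤ hankelRank φ b b' := by
  obtain ⟨α, hα, hαq, hlow, hαN⟩ := exists_minimal_monomial hD hD'
  have hsupport : t ≤ α.support.card := by
    refine Nat.le_of_mul_le_mul_left ?_ (Nat.sub_pos_of_lt (Fintype.one_lt_card (α := F)))
    exact htq.trans (hα ▸ degree_le_mul_card_support hαq)
  obtain ⟨T, hTα, rfl⟩ := Finset.exists_subset_card_eq hsupport
  have hT : squarefreeExponent T ≤ α := squarefreeExponent_le_iff.2 hTα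
  have hdeg : (α - squarefreeExponent T).degree + T.card = D + 1 := by
    rw [← degree_squarefreeExponent, ← map_add, tsub_add_cancel_of_le hT, hα]
  obtain ⟨w, hw, hwdeg⟩ := Finsupp.exists_le_degree_eq (α - squarefreeExponent T) (b - m)
    (by omega)
  have hwT : w + squarefreeExponent T ≤ α :=
    (add_le_add_left hw _).trans_eq (tsub_add_cancel_of_le hT)
  have hcount := choose_add_finrank_le (K := hankelKer φ b b') hankelKer_le_reedMuller
    (by omega : w.degree + m ≤ b) hwT hlow hαN fun k hk _ γ hγ => by
      rw [LinearMap.mem_ker, mul_comm]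
      exact (mem_hankelKer.1 hk).2 _ (monomialFun_mem_reedMuller (by omega))
  have hrank := hankelRank_add_finrank_hankelKer φ b b'
  omega

end CountingMonomials

section CoordIndicator

variable {F σ : Type*} [Field F]

/-- The linear function `x ↦ x i - b`. -/
def coordSub (i : σ) (b : F) : (σ → F) → F := Function.eval i - Function.const (σ → F) b

lemma coordSub_mem_reedMuller (i : σ) (b : F) : coordSub i b ∈ reedMuller F σ 1 :=
  Submodule.sub_mem _ (eval_mem_reedMuller i) (const_mem_reedMuller b 1)

variable [Fintype F]

/-- The indicator function of the hyperplane `x i = b`, as a polynomial function. -/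
def coordIndicator (i : σ) (b : F) : (σ → F) → F := 1 - coordSub i b ^ (Fintype.card F - 1)

lemma coordIndicator_apply (i : σ) (b : F) (x : σ → F) :
    coordIndicator i b x = if x i = b then 1 else 0 := by
  have hcard : Fintype.card F - 1 ≠ 0 := Nat.sub_ne_zero_of_lt Fintype.one_lt_card
  split_ifs with h
  · simp [coordIndicator, coordSub, h, zero_pow hcard]
  · simp [coordIndicator, coordSub, FiniteField.pow_card_sub_one_eq_one _ (sub_ne_zero.2 h)]

lemma sum_coordIndicator (i : σ) : ∑ b : F, coordIndicator i b = 1 := by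
  ext x
  simp [Finset.sum_apply, coordIndicator_apply]

lemma coordSub_mul_coordIndicator (i : σ) (b : F) : coordSub i b * coordIndicator i b = 0 := by
  ext x
  by_cases h : x i = b <;> simp [coordSub, coordIndicator_apply, h]

lemma coordIndicator_mem_reedMuller (i : σ) (b : F) :
    coordIndicator i b ∈ reedMuller F σ (Fintype.card F - 1) := by
  have hpow := pow_mem_reedMuller (coordSub_mem_reedMuller i b) (Fintype.card F - 1)
  rw [mul_one] at hpow
  exact Submodule.sub_mem _ (one_mem_reedMuller _) hpow

end CoordIndicator

section SpanningDegree

variable {F σ : Type*} [Field F] [Finite F] [Finite σ]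

variable (F σ) in
lemma span_range_monomialFun :
    Submodule.span F (Set.range (monomialFun (F := F) (σ := σ))) = ⊤ := by
  have := Fintype.ofFinite F
  rw [eq_top_iff, ← MvPolynomial.map_restrict_dom_evalₗ F σ]
  rintro _ ⟨P, -, rfl⟩
  rw [P.as_sum, map_sum]
  refine Submodule.sum_mem _ fun α _ => ?_
  rw [evalₗ_monomial]
  exact Submodule.smul_mem _ _ (Submodule.subset_span ⟨α, rfl⟩)

lemma reedMuller_sup_vanishing_eq_top {e : ℕ} {V : Finset (σ → F)}
    (h : reedMuller F σ (e + 1) ≤ reedMuller F σ e ⊔ vanishing F V) :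
    reedMuller F σ e ⊔ vanishing F V = ⊤ := by
  rw [eq_top_iff, ← span_range_monomialFun F σ, Submodule.span_le]
  rintro _ ⟨α, rfl⟩
  rw [SetLike.mem_coe]
  induction α using exponent_induction with
  | zero =>
    rw [monomialFun_zero]
    exact Submodule.mem_sup_left (one_mem_reedMuller e)
  | add_single α i ih =>
    obtain ⟨g, hg, v, hv, hgv⟩ := Submodule.mem_sup.1 ih
    rw [monomialFun_add, monomialFun_single, pow_one, ← hgv, add_mul, mul_comm v]
    exact Submodule.add_mem _ (h (mul_mem_reedMuller hg (eval_mem_reedMuller i)))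
      (Submodule.mem_sup_right (mul_mem_vanishing _ hv))

end SpanningDegree

section Zeros

open Module

variable {F σ : Type*} [Field F] {K : Submodule F ((σ → F) → F)} {a e n : ℕ}

lemma exists_reduction (hred : reedMuller F σ a ≤ reedMuller F σ e ⊔ K) {j : ℕ} (hej : e ≤ j)
    (hja : j ≤ a) {f : (σ → F) → F} (hf : f ∈ reedMuller F σ j) :
    ∃ h ∈ reedMuller F σ e, f - h ∈ K ⊓ reedMuller F σ j := by
  obtain ⟨h, hh, k, hk, rfl⟩ := Submodule.mem_sup.1 (hred (reedMuller_mono hja hf))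
  exact ⟨h, hh, by rwa [add_sub_cancel_left],
    Submodule.sub_mem _ hf (reedMuller_mono hej hh)⟩

lemma IsTruncatedIdeal.mul_sub_eval_smul_mem (hK : IsTruncatedIdeal K a) {c : σ → F}
    {h : (σ → F) → F} (hh : h ∈ reedMuller F σ e)
    (hc : ∀ i, coordSub i (c i) * h ∈ K) (hn : n + e ≤ a)
    {f : (σ → F) → F} (hf : f ∈ reedMuller F σ n) : f * h - f c • h ∈ K := by
  suffices reedMuller F σ n ≤
      K.comap (LinearMap.mulRight F h - (LinearMap.proj c).smulRight h) from this hf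
  rw [reedMuller_eq_span, Submodule.span_le]
  rintro _ ⟨α, hα, rfl⟩
  replace hα : α.degree + e ≤ a := (Nat.add_le_add_right hα e).trans hn
  change monomialFun α * h - monomialFun α c • h ∈ K
  induction α using exponent_induction with
  | zero => simp [monomialFun_zero]
  | add_single α i ih =>
    rw [map_add, Finsupp.degree_single] at hα
    have hstep := hK.mul_mem (monomialFun_mem_reedMuller (le_refl α.degree)) (hc i)
      (mul_mem_reedMuller (coordSub_mem_reedMuller i (c i)) hh) (by omega)
    convert K.add_mem hstep (K.smul_mem (c i) (ih (by omega))) using 1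
    ext x
    simp only [monomialFun_add, monomialFun_single, pow_one, Pi.sub_apply, Pi.mul_apply,
      Pi.add_apply, Pi.smul_apply, smul_eq_mul, coordSub, Function.eval, Function.const]
    ring

variable [Fintype F]

lemma IsTruncatedIdeal.exists_localizer_step (hK : IsTruncatedIdeal K a)
    (hred : reedMuller F σ a ≤ reedMuller F σ e ⊔ K) (hn : n + e + (Fintype.card F - 1) ≤ a)
    (hn1 : 1 ≤ n) {p h : (σ → F) → F} (hp : p ∈ reedMuller F σ n) (hh : h ∈ reedMuller F σ e)
    (hph : p * h ∉ K) (i : σ) :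
    ∃ h' ∈ reedMuller F σ e, p * h' ∉ K ∧
      (∃ b, coordSub i b * h' ∈ K) ∧
      ∀ g ∈ reedMuller F σ 1, g * h ∈ K → g * h' ∈ K := by
  obtain ⟨b, hb⟩ : ∃ b : F, p * (h * coordIndicator i b) ∉ K := by
    contrapose! hph
    rw [← mul_one h, ← sum_coordIndicator i, Finset.mul_sum, Finset.mul_sum]
    exact Submodule.sum_mem _ fun b _ => hph b
  have hhb := mul_mem_reedMuller hh (coordIndicator_mem_reedMuller i b)
  obtain ⟨h', hh', hsub, hsub'⟩ := exists_reduction hred (Nat.le_add_right _ _) (by omega) hhb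
  have hmul_iff {m : ℕ} {g : (σ → F) → F} (hg : g ∈ reedMuller F σ m) (hm : m ≤ n) :
      g * h' ∈ K ↔ g * (h * coordIndicator i b) ∈ K := by
    have hg' : g * (h * coordIndicator i b) - g * h' ∈ K :=
      mul_sub g (h * coordIndicator i b) h' ▸ hK.mul_mem hg hsub hsub' (by omega)
    exact ⟨fun hmem => (K.sub_mem_iff_left hmem).1 hg',
      fun hmem => (K.sub_mem_iff_right hmem).1 hg'⟩
  refine ⟨h', hh', fun hph' => hb ((hmul_iff hp le_rfl).1 hph'), ⟨b, ?_⟩, fun g hg hgh => ?_⟩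
  · rw [hmul_iff (coordSub_mem_reedMuller i b) hn1, mul_left_comm,
      coordSub_mul_coordIndicator, mul_zero]
    exact K.zero_mem
  · rw [hmul_iff hg hn1, ← mul_assoc, mul_comm]
    exact hK.mul_mem (coordIndicator_mem_reedMuller i b) hgh (mul_mem_reedMuller hg hh)
      (by omega)

variable [Finite σ]

lemma IsTruncatedIdeal.exists_localizer (hK : IsTruncatedIdeal K a)
    (hred : reedMuller F σ a ≤ reedMuller F σ e ⊔ K) (hn : n + e + (Fintype.card F - 1) ≤ a)
    (hn1 : 1 ≤ n) {p : (σ → F) → F} (hp : p ∈ reedMuller F σ n) (hpK : p ∉ K) :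
    ∃ h ∈ reedMuller F σ e, p * h ∉ K ∧
      ∃ c : σ → F, ∀ i, coordSub i (c i) * h ∈ K := by
  have := Fintype.ofFinite σ
  suffices ∀ I : Finset σ, ∃ h ∈ reedMuller F σ e, p * h ∉ K ∧
      ∀ i ∈ I, ∃ b, coordSub i b * h ∈ K by
    obtain ⟨h, hh, hph, hb⟩ := this Finset.univ
    choose c hc using fun i => hb i (Finset.mem_univ i)
    exact ⟨h, hh, hph, c, hc⟩
  intro I
  induction I using Finset.induction_on with
  | empty => exact ⟨1, one_mem_reedMuller e, by rwa [mul_one], by simp⟩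
  | insert i I _ ih =>
    obtain ⟨h, hh, hph, hI⟩ := ih
    obtain ⟨h', hh', hph', hi', hmul⟩ := hK.exists_localizer_step hred hn hn1 hp hh hph i
    refine ⟨h', hh', hph', Finset.forall_mem_insert .. |>.2 ⟨hi', fun j hj => ?_⟩⟩
    obtain ⟨b, hb⟩ := hI j hj
    exact ⟨b, hmul _ (coordSub_mem_reedMuller j b) hb⟩

/-- The common zeros of the elements of degree at most `n` of `K`. -/
noncomputable def zeroLocus (K : Submodule F ((σ → F) → F)) (n : ℕ) : Finset (σ → F) :=
  (Set.toFinite {c | ∀ k ∈ K ⊓ reedMuller F σ n, k c = 0}).toFinset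

lemma mem_zeroLocus {c : σ → F} :
    c ∈ zeroLocus K n ↔ ∀ k ∈ K ⊓ reedMuller F σ n, k c = 0 := by
  simp [zeroLocus]

lemma inf_reedMuller_le_vanishing_zeroLocus :
    K ⊓ reedMuller F σ n ≤ vanishing F (zeroLocus K n) := fun k hk =>
  mem_vanishing.2 fun _ hc => mem_zeroLocus.1 hc k hk

-- A localizer `h` at `c` with `p * h ∉ K` turns multiplication of `h` by functions of degree at
-- most `n` into evaluation at `c`, modulo `K`; hence `c` is a zero of `K` but not of `p`.
lemma IsTruncatedIdeal.reedMuller_inf_vanishing_zeroLocus_le (hK : IsTruncatedIdeal K a)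
    (hred : reedMuller F σ a ≤ reedMuller F σ e ⊔ K) (hn : n + e + (Fintype.card F - 1) ≤ a)
    (hn1 : 1 ≤ n) : reedMuller F σ n ⊓ vanishing F (zeroLocus K n) ≤ K := by
  rintro p ⟨hp, hpV⟩
  by_contra hpK
  obtain ⟨h, hh, hph, c, hc⟩ := hK.exists_localizer hred hn hn1 hp hpK
  have hact {f : (σ → F) → F} (hf : f ∈ reedMuller F σ n) : f * h - f c • h ∈ K :=
    hK.mul_sub_eval_smul_mem hh hc (by omega) hf
  have hhK : h ∉ K := fun hhK => hph (hK.mul_mem hp hhK hh (by omega))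
  have hcV : c ∈ zeroLocus K n := by
    refine mem_zeroLocus.2 fun k ⟨hk, hkn⟩ => ?_
    by_contra hkc
    have hkh : k * h ∈ K := mul_comm h k ▸ hK.mul_mem hh hk hkn (by omega)
    exact hhK ((K.smul_mem_iff hkc).1 ((K.sub_mem_iff_right hkh).1 (hact hkn)))
  have hpc := hact hp
  rw [mem_vanishing.1 hpV c hcV, zero_smul, sub_zero] at hpc
  exact hph hpc

lemma card_zeroLocus_add_finrank_le (hK : K ≤ reedMuller F σ a)
    (hred : reedMuller F σ a ≤ reedMuller F σ e ⊔ K) (hen : e + 1 ≤ n) (hna : n ≤ a) :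
    (zeroLocus K n).card + finrank F K ≤ finrank F (reedMuller F σ a) := by
  have : FiniteDimensional F K := Submodule.finiteDimensional_of_le hK
  have htop : reedMuller F σ e ⊔ vanishing F (zeroLocus K n) = ⊤ := by
    refine reedMuller_sup_vanishing_eq_top fun f hf => ?_
    obtain ⟨h, hh, hk, hk'⟩ := exists_reduction hred e.le_succ (hen.trans hna) hf
    rw [← add_sub_cancel h f]
    exact Submodule.add_mem_sup hh
      (inf_reedMuller_le_vanishing_zeroLocus ⟨hk, reedMuller_mono hen hk'⟩)
  have hV := card_add_finrank_inf_vanishing_of_sup_eq_top htop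
  have hinf : finrank F ↥(reedMuller F σ e ⊓ K) ≤
      finrank F ↥(reedMuller F σ e ⊓ vanishing F (zeroLocus K n)) :=
    Submodule.finrank_mono fun k hk => ⟨hk.1,
      inf_reedMuller_le_vanishing_zeroLocus ⟨hk.2, reedMuller_mono (by omega) hk.1⟩⟩
  have hsup : finrank F ↥(reedMuller F σ e ⊔ K) ≤ finrank F (reedMuller F σ a) :=
    Submodule.finrank_mono (sup_le (reedMuller_mono (by omega)) hK)
  have hdim := Submodule.finrank_sup_add_finrank_inf_eq (reedMuller F σ e) K
  omega

end Zeros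

section Arithmetic

lemma mul_le_choose_div {M c x : ℕ} (hc : 0 < c) (h : (4 * M * c + 1) * c ≤ x) :
    M * x ≤ (x / c).choose 2 := by
  obtain ⟨y, hy⟩ : ∃ y, x / c = y + 1 :=
    Nat.exists_eq_add_one.2 (Nat.div_pos ((Nat.le_mul_of_pos_left c (by omega)).trans h) hc)
  have hyc : 4 * M * c ≤ y := by
    have := (Nat.le_div_iff_mul_le hc).2 h
    omega
  have hx : x ≤ c * (y + 2) := by
    have := Nat.lt_mul_div_succ x hc
    rw [hy] at this
    exact this.le
  rw [hy, Nat.choose_two_right, Nat.le_div_iff_mul_le two_pos, Nat.add_sub_cancel]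
  calc M * x * 2 ≤ M * (c * (y + 2)) * 2 := by gcongr
    _ = 2 * M * c * (y + 2) := by ring
    _ ≤ 2 * M * c * (2 * (y + 1)) := by gcongr; omega
    _ = (y + 1) * (4 * M * c) := by ring
    _ ≤ (y + 1) * y := by gcongr

lemma exists_eq_apply_succ {f : ℕ → ℕ} (hf : Monotone f) {C m : ℕ} (hm : f m + C < m) :
    ∃ s < m, f s = f (s + 1) ∧ f s + C = s ∧ ∀ D, s < D → D ≤ m → f D + C < D := by
  set s := Nat.findGreatest (fun s => s ≤ f s + C) m
  have hs : s ≤ f s + C := Nat.findGreatest_spec (P := fun s => s ≤ f s + C) m.zero_le (by simp)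
  have habove (D : ℕ) (hsD : s < D) (hDm : D ≤ m) : f D + C < D :=
    not_le.1 (Nat.findGreatest_is_greatest (P := fun s => s ≤ f s + C) hsD hDm)
  have hsm : s < m := by
    refine lt_of_le_of_ne (Nat.findGreatest_le m) fun h => ?_
    rw [h] at hs
    omega
  have hsucc := habove (s + 1) s.lt_succ_self hsm
  have hmono : f s ≤ f (s + 1) := hf s.le_succ
  exact ⟨s, hsm, by omega, by omega, habove⟩

end Arithmetic

section Structure

open Module

variable {F σ : Type*} [Field F] {φ : Dual F ((σ → F) → F)} {a b m n : ℕ} {V : Finset (σ → F)}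

/-- The rank of the most balanced Hankel form of `φ` of total degree `s`. -/
noncomputable def balancedRank (φ : Dual F ((σ → F) → F)) (s : ℕ) : ℕ :=
  hankelRank φ ((s + 1) / 2) (s / 2)

lemma balancedRank_two_mul (φ : Dual F ((σ → F) → F)) (d : ℕ) :
    balancedRank φ (2 * d) = hankelRank φ d d := by
  rw [balancedRank, show (2 * d + 1) / 2 = d by omega, show 2 * d / 2 = d by omega]

variable [Finite σ]

lemma balancedRank_mono (φ : Dual F ((σ → F) → F)) : Monotone (balancedRank φ) := fun _ _ h =>
  hankelRank_mono φ (by omega) (by omega)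

lemma balancedRank_succ (φ : Dual F ((σ → F) → F)) (s : ℕ) :
    balancedRank φ (s + 1) = hankelRank φ ((s + 1) / 2) (s / 2 + 1) := by
  rw [balancedRank, hankelRank_comm, show (s + 1 + 1) / 2 = s / 2 + 1 by omega]

variable [Fintype F] [LinearOrder σ]

lemma exists_reedMuller_inf_vanishing_le_ker_of_flat
    (hflat : hankelRank φ a b = hankelRank φ a (b + 1)) (ha : 4 * (Fintype.card F - 1) ≤ a)
    (hrank : hankelRank φ a b < (a / (4 * (Fintype.card F - 1))).choose 2) :
    ∃ V : Finset (σ → F), V.card ≤ hankelRank φ a b ∧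
      reedMuller F σ (a / 2) ⊓ vanishing F V ≤ LinearMap.ker φ := by
  have hq : 0 < Fintype.card F - 1 := Nat.sub_pos_of_lt Fintype.one_lt_card
  have hK := isTruncatedIdeal_hankelKer hflat
  have hdim := hankelRank_add_finrank_hankelKer φ a b
  rw [← Nat.div_div_eq_div_mul] at hrank
  have hred : reedMuller F σ a ≤ reedMuller F σ (a / 4) ⊔ hankelKer φ a b :=
    hK.reedMuller_le_sup (m := 2) (by omega)
  have hcard := card_zeroLocus_add_finrank_le (n := a / 2) hK.le hred (by omega) (by omega)
  refine ⟨zeroLocus (hankelKer φ a b) (a / 2), by omega, fun p hp => ?_⟩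
  have hpK := hK.reedMuller_inf_vanishing_zeroLocus_le hred (by omega) (by omega) hp
  simpa using (mem_hankelKer.1 hpK).2 1 (one_mem_reedMuller b)

lemma reedMuller_inf_vanishing_le_ker (hV : reedMuller F σ n ⊓ vanishing F V ≤ LinearMap.ker φ)
    (hrank : ∀ D, n < D → D ≤ m →
      balancedRank φ D + V.card < (D / (2 * (Fintype.card F - 1))).choose 2) :
    reedMuller F σ m ⊓ vanishing F V ≤ LinearMap.ker φ := by
  have hφ : φ ∈ (reedMuller F σ n ⊓ vanishing F V).dualAnnihilator :=
    (Submodule.mem_dualAnnihilator φ).2 fun p hp => hV hp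
  rw [Subspace.dualAnnihilator_inf_eq] at hφ
  obtain ⟨ψ, hψ, φ', hφ', rfl⟩ := Submodule.mem_sup.1 hφ
  suffices ∀ D ≤ max n m, reedMuller F σ D ≤ LinearMap.ker ψ from fun p hp => by
    have hψp : ψ p = 0 := this m (le_max_right n m) hp.1
    have hφ'p : φ' p = 0 := (Submodule.mem_dualAnnihilator φ').1 hφ' p hp.2
    rw [LinearMap.mem_ker, LinearMap.add_apply, hψp, hφ'p, add_zero]
  have hbase : reedMuller F σ n ≤ LinearMap.ker ψ := (Submodule.mem_dualAnnihilator ψ).1 hψ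
  intro D
  induction D with
  | zero => exact fun _ => (reedMuller_mono n.zero_le).trans hbase
  | succ D ih =>
    intro hD
    obtain hDn | hDn := le_or_gt (D + 1) n
    · exact (reedMuller_mono hDn).trans hbase
    specialize hrank (D + 1) hDn (by omega)
    by_contra hker
    have htwo : 2 ≤ (D + 1) / (2 * (Fintype.card F - 1)) := by
      by_contra! hlt
      rw [Nat.choose_eq_zero_of_lt hlt] at hrank
      omega
    have hhalf : (D + 1) / (2 * (Fintype.card F - 1)) ≤ (D + 1) / 2 := by
      rw [← Nat.div_div_eq_div_mul]
      exact Nat.div_le_self _ _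
    have hchoose := choose_le_hankelRank (m := 2) (ih (by omega)) hker
      (by omega : (D + 1 + 1) / 2 + (D + 1) / 2 = D + 1) (by omega) hhalf
      ((Nat.mul_le_mul_right _ (by omega)).trans (Nat.mul_div_le (D + 1) _))
    have hadd := hankelRank_add_le (ψ + φ') (-φ') ((D + 1 + 1) / 2) ((D + 1) / 2)
    have hcard := hankelRank_le_card hφ' ((D + 1 + 1) / 2) ((D + 1) / 2)
    rw [add_neg_cancel_right, hankelRank_neg] at hadd
    rw [balancedRank] at hrank
    omega

-- At the last `s` with `s ≤ balancedRank φ s + C` the rank is stationary, so `φ` is an evaluation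
-- on few points up to degree about `s / 4`; above `s` the rank is too small for this to break down.
theorem exists_reedMuller_inf_vanishing_le_ker
    (h : balancedRank φ m + 600 * (Fintype.card F - 1) ^ 2 < m) :
    ∃ V : Finset (σ → F), V.card ≤ balancedRank φ m ∧
      reedMuller F σ m ⊓ vanishing F V ≤ LinearMap.ker φ := by
  have hq : 0 < Fintype.card F - 1 := Nat.sub_pos_of_lt Fintype.one_lt_card
  have hq2 : Fintype.card F - 1 ≤ (Fintype.card F - 1) ^ 2 := Nat.le_self_pow two_ne_zero _
  obtain ⟨s, hsm, hflat, hs, habove⟩ := exists_eq_apply_succ (balancedRank_mono φ) h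
  rw [balancedRank_succ, balancedRank] at hflat
  have hrank : hankelRank φ ((s + 1) / 2) (s / 2) <
      ((s + 1) / 2 / (4 * (Fintype.card F - 1))).choose 2 := by
    have hchoose := mul_le_choose_div (M := 2) (c := 4 * (Fintype.card F - 1)) (x := (s + 1) / 2)
      (by omega) (by rw [Nat.le_div_iff_mul_le two_pos]; nlinarith)
    rw [balancedRank] at hs
    omega
  obtain ⟨V, hVcard, hV⟩ :=
    exists_reedMuller_inf_vanishing_le_ker_of_flat hflat (by omega) hrank
  refine ⟨V, hVcard.trans (balancedRank_mono φ hsm.le),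
    reedMuller_inf_vanishing_le_ker hV fun D hD hDm => ?_⟩
  have hchoose := mul_le_choose_div (M := 8) (c := 2 * (Fintype.card F - 1)) (x := D)
    (by omega) (by nlinarith [show s ≤ 4 * D by omega])
  change V.card ≤ balancedRank φ s at hVcard
  obtain hsD | hsD := lt_or_ge s D
  · have := habove D hsD hDm
    omega
  · have := balancedRank_mono φ hsD
    omega

end Structure

section Fourier

open ComplexConjugate

variable {E ι : Type*} [AddCommGroup E]

/-- The Fourier coefficient at `χ` of a function restricted to `H`. -/
noncomputable def fourierCoeffOn (H : Finset E) (A : E → ℝ) (χ : AddChar E ℂ) : ℂ :=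
  ∑ f ∈ H, A f * conj (χ f)

/-- The operator that averages a function over the translations by `w i` for `i ∈ I`. -/
noncomputable def translationAverage (I : Finset ι) (w : ι → E) (A : E → ℝ) : E → ℝ :=
  fun f => (∑ i ∈ I, A (f + w i)) / I.card

/-- The eigenvalue of `translationAverage I w` at the character `χ`. -/
noncomputable def translationEigenvalue (I : Finset ι) (w : ι → E) (χ : AddChar E ℂ) : ℂ :=
  (∑ i ∈ I, χ (w i)) / I.card

variable {H : Finset E} {I : Finset ι} {w : ι → E} [Finite E]

lemma fourierCoeffOn_comp_add_right {g : E} (hg : ∀ f, f + g ∈ H ↔ f ∈ H) (A : E → ℝ)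
    (χ : AddChar E ℂ) :
    fourierCoeffOn H (fun f => A (f + g)) χ = χ g * fourierCoeffOn H A χ := by
  rw [fourierCoeffOn, fourierCoeffOn, Finset.mul_sum]
  refine Finset.sum_equiv (Equiv.addRight g) (fun f => (hg f).symm) fun f _ => ?_
  have hχ : χ g * conj (χ g) = 1 := by
    rw [Complex.mul_conj', AddChar.norm_apply, Complex.ofReal_one, one_pow]
  rw [Equiv.coe_addRight, AddChar.map_add_eq_mul, map_mul]
  linear_combination -A (f + g) * conj (χ f) * hχ

lemma fourierCoeffOn_translationAverage (hw : ∀ i ∈ I, ∀ f, f + w i ∈ H ↔ f ∈ H) (A : E → ℝ)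
    (χ : AddChar E ℂ) : fourierCoeffOn H (translationAverage I w A) χ =
      translationEigenvalue I w χ * fourierCoeffOn H A χ :=
  calc fourierCoeffOn H (translationAverage I w A) χ
      = (∑ i ∈ I, fourierCoeffOn H (fun f => A (f + w i)) χ) / I.card := by
        simp only [fourierCoeffOn, translationAverage]
        rw [Finset.sum_comm, Finset.sum_div]
        refine Finset.sum_congr rfl fun f _ => ?_
        rw [← Finset.sum_mul]
        push_cast
        ring
    _ = translationEigenvalue I w χ * fourierCoeffOn H A χ := by
        rw [Finset.sum_congr rfl fun i hi => fourierCoeffOn_comp_add_right (hw i hi) A χ,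
          ← Finset.sum_mul, translationEigenvalue, div_mul_eq_mul_div]

lemma fourierCoeffOn_iterate_translationAverage (hw : ∀ i ∈ I, ∀ f, f + w i ∈ H ↔ f ∈ H)
    (A : E → ℝ) (χ : AddChar E ℂ) (t : ℕ) :
    fourierCoeffOn H ((translationAverage I w)^[t] A) χ =
      translationEigenvalue I w χ ^ t * fourierCoeffOn H A χ := by
  induction t with
  | zero => simp
  | succ t ih =>
    rw [Function.iterate_succ_apply', fourierCoeffOn_translationAverage hw, ih, pow_succ']
    ring

end Fourier

section Plancherel

open ComplexConjugate

variable {E ι κ : Type*} [AddCommGroup E] [Fintype E] {H : Finset E}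

lemma sum_conj_fourierCoeffOn_mul_fourierCoeffOn (H : Finset E) (A B : E → ℝ) :
    ∑ χ : AddChar E ℂ, conj (fourierCoeffOn H A χ) * fourierCoeffOn H B χ =
      Fintype.card E * ∑ f ∈ H, (A f * B f : ℂ) := by
  have horth (f g : E) :
      ∑ χ : AddChar E ℂ, χ f * conj (χ g) = if f = g then (Fintype.card E : ℂ) else 0 := by
    simp_rw [← AddChar.map_neg_eq_conj, ← AddChar.map_add_eq_mul, ← sub_eq_add_neg]
    rw [AddChar.sum_apply_eq_ite]
    simp only [sub_eq_zero]
  calc ∑ χ : AddChar E ℂ, conj (fourierCoeffOn H A χ) * fourierCoeffOn H B χ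
      = ∑ χ : AddChar E ℂ, ∑ f ∈ H, ∑ g ∈ H, A f * B g * (χ f * conj (χ g)) := by
        refine Finset.sum_congr rfl fun χ _ => ?_
        rw [fourierCoeffOn, fourierCoeffOn, map_sum, Finset.sum_mul_sum]
        refine Finset.sum_congr rfl fun f _ => Finset.sum_congr rfl fun g _ => ?_
        rw [map_mul, Complex.conj_ofReal, Complex.conj_conj]
        ring
    _ = ∑ f ∈ H, ∑ g ∈ H, A f * B g * ∑ χ : AddChar E ℂ, χ f * conj (χ g) := by
        rw [Finset.sum_comm]
        refine Finset.sum_congr rfl fun f _ => ?_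
        rw [Finset.sum_comm]
        simp_rw [Finset.mul_sum]
    _ = Fintype.card E * ∑ f ∈ H, (A f * B f : ℂ) := by
        rw [Finset.mul_sum]
        refine Finset.sum_congr rfl fun f hf => ?_
        simp_rw [horth, mul_ite, mul_zero]
        rw [Finset.sum_ite_eq, if_pos hf, mul_comm]

lemma sum_norm_fourierCoeffOn_sq_le {A : E → ℝ} (hA : ∀ f ∈ H, |A f| ≤ 1) :
    ∑ χ : AddChar E ℂ, ‖fourierCoeffOn H A χ‖ ^ 2 ≤ Fintype.card E * H.card := by
  have hsum : ∑ χ : AddChar E ℂ, ‖fourierCoeffOn H A χ‖ ^ 2 =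
      Fintype.card E * ∑ f ∈ H, A f ^ 2 := by
    have h := sum_conj_fourierCoeffOn_mul_fourierCoeffOn H A A
    simp_rw [Complex.conj_mul', ← pow_two] at h
    exact_mod_cast h
  rw [hsum]
  gcongr
  simpa using Finset.sum_le_card_nsmul H _ 1 fun f hf => (sq_le_one_iff_abs_le_one _).2 (hA f hf)

lemma sum_norm_fourierCoeffOn_mul_le {A B : E → ℝ} (hA : ∀ f ∈ H, |A f| ≤ 1)
    (hB : ∀ f ∈ H, |B f| ≤ 1) :
    ∑ χ : AddChar E ℂ, ‖fourierCoeffOn H A χ‖ * ‖fourierCoeffOn H B χ‖ ≤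
      Fintype.card E * H.card :=
  calc ∑ χ : AddChar E ℂ, ‖fourierCoeffOn H A χ‖ * ‖fourierCoeffOn H B χ‖
      ≤ ∑ χ : AddChar E ℂ,
          (‖fourierCoeffOn H A χ‖ ^ 2 / 2 + ‖fourierCoeffOn H B χ‖ ^ 2 / 2) := by
        gcongr with χ
        linarith [two_mul_le_add_sq ‖fourierCoeffOn H A χ‖ ‖fourierCoeffOn H B χ‖]
    _ ≤ Fintype.card E * H.card := by
        rw [Finset.sum_add_distrib, ← Finset.sum_div, ← Finset.sum_div]
        linarith [sum_norm_fourierCoeffOn_sq_le hA, sum_norm_fourierCoeffOn_sq_le hB]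

variable {I : Finset ι} {w : ι → E} {J : Finset κ} {u : κ → E}

lemma card_mul_sum_sub_sum_iterate (hw : ∀ i ∈ I, ∀ f, f + w i ∈ H ↔ f ∈ H)
    (hu : ∀ j ∈ J, ∀ f, f + u j ∈ H ↔ f ∈ H) (A B : E → ℝ) (t : ℕ) :
    (Fintype.card E * (∑ f ∈ H, A f * translationAverage I w B f -
      ∑ f ∈ H, (translationAverage J u)^[t] A f *
        translationAverage I w ((translationAverage J u)^[t] B) f : ℝ) : ℂ) =
    ∑ χ : AddChar E ℂ, conj (fourierCoeffOn H A χ) * fourierCoeffOn H B χ *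
      (translationEigenvalue I w χ * ((1 - ‖translationEigenvalue J u χ‖ ^ (2 * t) : ℝ) : ℂ)) := by
  push_cast
  rw [mul_sub, ← sum_conj_fourierCoeffOn_mul_fourierCoeffOn,
    ← sum_conj_fourierCoeffOn_mul_fourierCoeffOn, ← Finset.sum_sub_distrib]
  refine Finset.sum_congr rfl fun χ _ => ?_
  rw [fourierCoeffOn_translationAverage hw, fourierCoeffOn_translationAverage hw,
    fourierCoeffOn_iterate_translationAverage hu, fourierCoeffOn_iterate_translationAverage hu,
    pow_mul, ← Complex.conj_mul', mul_pow, map_mul, map_pow]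
  ring

end Plancherel

theorem abs_sum_sub_sum_iterate_le {E ι κ : Type*} [AddCommGroup E] [Finite E] {H : Finset E}
    {I : Finset ι} {w : ι → E} {J : Finset κ} {u : κ → E} (hw : ∀ i ∈ I, ∀ f, f + w i ∈ H ↔ f ∈ H)
    (hu : ∀ j ∈ J, ∀ f, f + u j ∈ H ↔ f ∈ H) {A B : E → ℝ} (hA : ∀ f ∈ H, |A f| ≤ 1)
    (hB : ∀ f ∈ H, |B f| ≤ 1) {t : ℕ} {M : ℝ}
    (hM : ∀ χ : AddChar E ℂ,
      ‖translationEigenvalue I w χ‖ * |1 - ‖translationEigenvalue J u χ‖ ^ (2 * t)| ≤ M) :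
    |∑ f ∈ H, A f * translationAverage I w B f -
      ∑ f ∈ H, (translationAverage J u)^[t] A f *
        translationAverage I w ((translationAverage J u)^[t] B) f| ≤ M * H.card := by
  have := Fintype.ofFinite E
  have hM0 : 0 ≤ M := (by positivity : (0 : ℝ) ≤ _).trans (hM 0)
  refine le_of_mul_le_mul_left ?_ (Nat.cast_pos.2 (Fintype.card_pos (α := E)) : (0 : ℝ) < _)
  set D := ∑ f ∈ H, A f * translationAverage I w B f - ∑ f ∈ H, _
  calc Fintype.card E * |D| = ‖(Fintype.card E * (D : ℝ) : ℂ)‖ := by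
        rw [norm_mul, Complex.norm_natCast, Complex.norm_real, Real.norm_eq_abs]
    _ ≤ ∑ χ : AddChar E ℂ, ‖fourierCoeffOn H A χ‖ * ‖fourierCoeffOn H B χ‖ * M := by
        rw [card_mul_sum_sub_sum_iterate hw hu]
        refine norm_sum_le_of_le _ fun χ _ => ?_
        rw [norm_mul, norm_mul, RCLike.norm_conj, norm_mul (translationEigenvalue I w χ),
          Complex.norm_real, Real.norm_eq_abs]
        gcongr
        exact hM χ
    _ ≤ Fintype.card E * H.card * M := by
        rw [← Finset.sum_mul]
        gcongr
        exact sum_norm_fourierCoeffOn_mul_le hA hB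
    _ = Fintype.card E * (M * H.card) := by ring

section Characters

open Module

variable {F E : Type*} [Field F] {ψ : AddChar F ℂ}

lemma eq_zero_of_forall_apply_mul_eq_one (hψ : ψ.IsPrimitive) {y : F} (h : ∀ c, ψ (y * c) = 1) :
    y = 0 := by
  by_contra hy
  exact hψ hy (DFunLike.ext _ _ h)

lemma exists_dual_apply_eq [Finite F] [AddCommGroup E] [Finite E] [Module F E] (hψ : ψ.IsPrimitive)
    (χ : AddChar E ℂ) : ∃ φ : Dual F E, ∀ f, χ f = ψ (φ f) := by
  have := Fintype.ofFinite E
  have : Finite (Dual F E) := DFunLike.finite _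
  have := Fintype.ofFinite (Dual F E)
  let Ψ : Dual F E → AddChar E ℂ := fun φ => ψ.compAddMonoidHom φ.toAddMonoidHom
  have hinj : Function.Injective Ψ := fun φ φ' h => by
    rw [← sub_eq_zero]
    refine LinearMap.ext fun f => eq_zero_of_forall_apply_mul_eq_one hψ fun c => ?_
    have hc : ψ (φ (c • f)) = ψ (φ' (c • f)) := DFunLike.congr_fun h (c • f)
    rw [LinearMap.sub_apply, mul_comm, ← smul_eq_mul, smul_sub, ← map_smul, ← map_smul,
      AddChar.map_sub_eq_div, hc, div_self (norm_ne_zero_iff.1 (by simp))]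
  have hcard : Fintype.card (Dual F E) = Fintype.card (AddChar E ℂ) := by
    rw [AddChar.card_eq, ← Nat.card_eq_fintype_card, ← Nat.card_eq_fintype_card,
      natCard_eq_pow_finrank (K := F), Subspace.dual_finrank_eq, ← natCard_eq_pow_finrank]
  obtain ⟨φ, rfl⟩ := ((Fintype.bijective_iff_injective_and_card Ψ).2 ⟨hinj, hcard⟩).surjective χ
  exact ⟨φ, fun _ => rfl⟩

end Characters

section GaussSum

open ComplexConjugate Module

lemma norm_sum_sq_le_card_mul_card {W : Type*} [AddCommGroup W] [Fintype W] {Q c : W → ℂ}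
    {b : W → AddChar W ℂ} (hc : ∀ h, ‖c h‖ ≤ 1)
    (hQ : ∀ p h, conj (Q p) * Q (p + h) = c h * b h p) :
    ‖∑ p, Q p‖ ^ 2 ≤ Fintype.card W * (Finset.univ.filter fun h => b h = 0).card := by
  have hexpand : conj (∑ p, Q p) * ∑ p, Q p = ∑ h, c h * ∑ p, b h p :=
    calc conj (∑ p, Q p) * ∑ p, Q p = ∑ p, ∑ h, conj (Q p) * Q (p + h) := by
          rw [map_sum, Finset.sum_mul_sum]
          exact Finset.sum_congr rfl fun p _ =>
            (Equiv.sum_comp (Equiv.addLeft p) fun h => conj (Q p) * Q h).symm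
      _ = ∑ h, c h * ∑ p, b h p := by
          simp_rw [hQ, Finset.mul_sum]
          exact Finset.sum_comm
  calc ‖∑ p, Q p‖ ^ 2 = ‖∑ h, c h * ∑ p, b h p‖ := by
        rw [← hexpand, norm_mul, RCLike.norm_conj, sq]
    _ ≤ ∑ h, if b h = 0 then (Fintype.card W : ℝ) else 0 := by
        refine norm_sum_le_of_le _ fun h _ => ?_
        rw [norm_mul, AddChar.sum_eq_ite, apply_ite norm, Complex.norm_natCast, norm_zero]
        exact mul_le_of_le_one_left (by positivity) (hc h)
    _ = Fintype.card W * (Finset.univ.filter fun h => b h = 0).card := by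
        rw [← Finset.sum_filter, Finset.sum_const, nsmul_eq_mul, mul_comm]

variable {F W : Type*} [Field F] [NeZero (2 : F)] [AddCommGroup W] [Module F W] [Fintype W]
  {ψ : AddChar F ℂ}

lemma norm_sum_apply_mul_self_add_sq_le [Finite F] (hψ : ψ.IsPrimitive) {B : W →ₗ[F] Dual F W}
    (hB : ∀ p q, B p q = B q p) {a : F} (ha : a ≠ 0) (c : F) :
    ‖∑ p, ψ (a * (B p p + c))‖ ^ 2 ≤ Fintype.card W * Nat.card (LinearMap.ker B) := by
  let b (h : W) : AddChar W ℂ := ψ.compAddMonoidHom ((2 * a) • B h).toAddMonoidHom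
  have hb (h p : W) : b h p = ψ (2 * a * B h p) := rfl
  have hker (h : W) (hh : b h = 0) : h ∈ LinearMap.ker B := by
    refine LinearMap.ext fun q => ?_
    refine (mul_eq_zero.1 (eq_zero_of_forall_apply_mul_eq_one hψ (y := 2 * a * B h q)
      fun c => ?_)).resolve_left (mul_ne_zero two_ne_zero ha)
    rw [mul_assoc, mul_comm _ c, ← smul_eq_mul c, ← map_smul, ← hb, hh, AddChar.zero_apply]
  refine (norm_sum_sq_le_card_mul_card (b := b) (c := fun h => ψ (a * B h h))
    (fun h => (AddChar.norm_apply _ _).le) fun p h => ?_).trans ?_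
  · rw [hb, ← AddChar.map_neg_eq_conj, ← AddChar.map_add_eq_mul, ← AddChar.map_add_eq_mul]
    congr 1
    simp only [map_add, LinearMap.add_apply, hB p h]
    ring
  · gcongr
    rw [← Fintype.card_subtype, ← Nat.card_eq_fintype_card]
    exact Nat.card_mono (Set.toFinite _) hker

lemma norm_sum_sq_mul_card_pow_finrank_range_le [Fintype F] (hψ : ψ.IsPrimitive)
    {B : W →ₗ[F] Dual F W} (hB : ∀ p q, B p q = B q p) {a : F} (ha : a ≠ 0) (c : F) :
    ‖∑ p, ψ (a * (B p p + c))‖ ^ 2 * Fintype.card F ^ finrank F (LinearMap.range B) ≤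
      (Fintype.card W : ℝ) ^ 2 := by
  have hcard : Nat.card (LinearMap.ker B) * Fintype.card F ^ finrank F (LinearMap.range B) =
      Fintype.card W := by
    rw [natCard_eq_pow_finrank (K := F), Nat.card_eq_fintype_card, ← pow_add, add_comm,
      LinearMap.finrank_range_add_finrank_ker, ← card_eq_pow_finrank]
  calc _ ≤ Fintype.card W * Nat.card (LinearMap.ker B) *
        (Fintype.card F : ℝ) ^ finrank F (LinearMap.range B) := by
        gcongr
        exact norm_sum_apply_mul_self_add_sq_le hψ hB ha c
    _ = (Fintype.card W : ℝ) ^ 2 := by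
        rw [mul_assoc, sq]
        exact_mod_cast congrArg (Fintype.card W * ·) hcard

end GaussSum

section CayleyT

open Module

lemma Trd_eq_translationAverage (r d : ℕ) : Trd r d =
    translationAverage (polyFinset r d ×ˢ ({1, 2} : Finset F3)) fun pa => shift pa.1 pa.2 := by
  funext A f
  rw [Trd, translationAverage, Finset.sum_product, Finset.card_product]
  simp [Finset.card_pair (show (1 : F3) ≠ 2 by decide)]

/-- The eigenvalue of `Trd r d` at the character `χ`. -/
noncomputable def eigenvalueT (r d : ℕ) (χ : AddChar (Fn r) ℂ) : ℂ :=
  translationEigenvalue (polyFinset r d ×ˢ ({1, 2} : Finset F3)) (fun pa => shift pa.1 pa.2) χ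

lemma add_shift_mem_polyFinset_iff {r d : ℕ} {p : Fn r} (hp : p ∈ polyFinset r d) (a : F3)
    (f : Fn r) : f + shift p a ∈ polyFinset r (2 * d) ↔ f ∈ polyFinset r (2 * d) := by
  have hshift : shift p a ∈ reedMuller F3 (Fin r) (2 * d) := Submodule.smul_mem _ a
    (add_mem (pow_mem_reedMuller (mem_polyFinset.1 hp) 2) (one_mem_reedMuller _))
  rw [mem_polyFinset, mem_polyFinset]
  exact Submodule.add_mem_iff_left _ hshift

lemma norm_sum_apply_shift_sq_mul_le {r : ℕ} {ψ : AddChar F3 ℂ} (hψ : ψ.IsPrimitive)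
    (φ : Dual F3 (Fn r)) (d : ℕ) {a : F3} (ha : a ≠ 0) :
    ‖∑ p ∈ polyFinset r d, ψ (φ (shift p a))‖ ^ 2 * 3 ^ hankelRank φ d d ≤
      ((polyFinset r d).card : ℝ) ^ 2 := by
  have : NeZero (2 : F3) := ⟨by decide⟩
  have := Fintype.ofFinite (reedMuller F3 (Fin r) d)
  have hshift (p : Fn r) : φ (shift p a) = a * (φ (p * p) + φ 1) := by
    rw [← map_add, ← smul_eq_mul, ← map_smul, ← sq]
    rfl
  have hsum : ∑ p ∈ polyFinset r d, ψ (φ (shift p a)) =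
      ∑ p : reedMuller F3 (Fin r) d, ψ (a * (φ (p * p) + φ 1)) := by
    simp_rw [hshift]
    exact Finset.sum_subtype _ (fun _ => mem_polyFinset) _
  have hcard : Fintype.card (reedMuller F3 (Fin r) d) = (polyFinset r d).card :=
    Fintype.card_of_subtype _ fun _ => mem_polyFinset
  rw [hsum, ← hcard]
  have h := norm_sum_sq_mul_card_pow_finrank_range_le hψ (B := hankel φ d d)
    (fun p q => by rw [hankel_apply, hankel_apply, mul_comm]) ha (φ 1)
  rw [ZMod.card] at h
  exact_mod_cast h

lemma norm_eigenvalueT_sq_mul_le {r : ℕ} {ψ : AddChar F3 ℂ} (hψ : ψ.IsPrimitive)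
    {χ : AddChar (Fn r) ℂ} {φ : Dual F3 (Fn r)} (hχ : ∀ f, χ f = ψ (φ f)) (d : ℕ) :
    ‖eigenvalueT r d χ‖ ^ 2 * 3 ^ hankelRank φ d d ≤ 1 := by
  let s (a : F3) : ℂ := ∑ p ∈ polyFinset r d, ψ (φ (shift p a))
  set N : ℝ := ((polyFinset r d).card : ℝ)
  set R := hankelRank φ d d
  have hsum : ‖∑ a ∈ ({1, 2} : Finset F3), s a‖ ^ 2 * 3 ^ R ≤ (N * 2) ^ 2 :=
    calc ‖∑ a ∈ ({1, 2} : Finset F3), s a‖ ^ 2 * 3 ^ R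
        ≤ 2 * (∑ a ∈ ({1, 2} : Finset F3), ‖s a‖ ^ 2) * 3 ^ R := by
          gcongr
          exact (pow_le_pow_left₀ (norm_nonneg _) (norm_sum_le _ _) 2).trans
            sq_sum_le_card_mul_sum_sq
      _ = 2 * ∑ a ∈ ({1, 2} : Finset F3), ‖s a‖ ^ 2 * 3 ^ R := by
          rw [mul_assoc, Finset.sum_mul]
      _ ≤ 2 * ∑ a ∈ ({1, 2} : Finset F3), N ^ 2 := by
          gcongr with a ha
          exact norm_sum_apply_shift_sq_mul_le hψ φ d (by rintro rfl; revert ha; decide)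
      _ = (N * 2) ^ 2 := by
          rw [Finset.sum_const, Finset.card_pair (by decide)]
          ring
  rw [eigenvalueT, translationEigenvalue, Finset.sum_product, Finset.sum_comm, norm_div, div_pow,
    div_mul_eq_mul_div, Finset.card_product, Finset.card_pair (by decide), Complex.norm_natCast]
  simp_rw [hχ]
  push_cast
  exact div_le_one_of_le₀ hsum (sq_nonneg _)

end CayleyT

section CayleyS

open Module

lemma norm_translationEigenvalue_le_one {E ι : Type*} [AddCommGroup E] [Finite E] (I : Finset ι)
    (w : ι → E) (χ : AddChar E ℂ) : ‖translationEigenvalue I w χ‖ ≤ 1 := by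
  rw [translationEigenvalue, norm_div, Complex.norm_natCast]
  refine div_le_one_of_le₀ ((norm_sum_le _ _).trans ?_) (Nat.cast_nonneg _)
  simp

lemma translationEigenvalue_smul {F E ι : Type*} [Field F] [Fintype F] [DecidableEq F]
    [AddCommGroup E] [Module F E] {ψ : AddChar F ℂ} (hψ : ψ.IsPrimitive) {χ : AddChar E ℂ}
    {φ : Dual F E} (hχ : ∀ f, χ f = ψ (φ f)) (I : Finset ι) (g : ι → E) :
    translationEigenvalue (I ×ˢ (Finset.univ : Finset F)) (fun ia => ia.2 • g ia.1) χ =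
      (I.filter fun i => φ (g i) = 0).card / I.card := by
  have hsum (i : ι) : ∑ a : F, χ (a • g i) = if φ (g i) = 0 then (Fintype.card F : ℂ) else 0 := by
    simp_rw [hχ, map_smul, smul_eq_mul]
    exact_mod_cast AddChar.sum_mulShift (φ (g i)) hψ
  have hF : (Fintype.card F : ℂ) ≠ 0 := Nat.cast_ne_zero.2 Fintype.card_ne_zero
  rw [translationEigenvalue, Finset.sum_product, Finset.sum_congr rfl fun i _ => hsum i,
    ← Finset.sum_filter, Finset.sum_const, nsmul_eq_mul, Finset.card_product, Finset.card_univ,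
    Nat.cast_mul, mul_div_mul_right _ _ hF]

/-- The pairs `(v, c)` over which the operator `Sop r d` averages. -/
noncomputable def ellParams (r d : ℕ) : Finset ((Fin d → Pt r) × (Fin d → F3)) :=
  LIset r d ×ˢ Finset.univ

lemma card_ellParams (r d : ℕ) : (ellParams r d).card = (LIset r d).card * 3 ^ d := by
  rw [ellParams, Finset.card_product, Finset.card_univ, Fintype.card_pi_const, ZMod.card]

lemma Sop_eq_translationAverage (r d : ℕ) : Sop r d =
    translationAverage (ellParams r d ×ˢ (Finset.univ : Finset F3))
      fun vca => vca.2 • ellProd vca.1.1 vca.1.2 := by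
  funext A f
  rw [Sop, translationAverage, Finset.sum_product, ellParams, Finset.sum_product,
    Finset.card_product, ← ellParams, card_ellParams, Finset.card_univ, ZMod.card]
  push_cast
  rfl

/-- The eigenvalue of `Sop r d` at the character `χ`. -/
noncomputable def eigenvalueS (r d : ℕ) (χ : AddChar (Fn r) ℂ) : ℂ :=
  translationEigenvalue (ellParams r d ×ˢ (Finset.univ : Finset F3))
    (fun vca => vca.2 • ellProd vca.1.1 vca.1.2) χ

variable {r d : ℕ}

lemma ellProd_mem_reedMuller (v : Fin d → Pt r) (c : Fin d → F3) :
    ellProd v c ∈ reedMuller F3 (Fin r) (2 * d) := by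
  have hℓ (i : Fin d) (k : F3) :
      (fun x => (∑ j, v i j * x j) + c i - k) ∈ reedMuller F3 (Fin r) 1 := by
    have h := sub_mem (add_mem (sum_mem fun j (_ : j ∈ Finset.univ) =>
      Submodule.smul_mem _ (v i j) (eval_mem_reedMuller j)) (const_mem_reedMuller (c i) 1))
      (const_mem_reedMuller k 1)
    convert h using 1
    funext x
    simp
  have h := prod_mem_reedMuller Finset.univ fun i _ => mul_mem_reedMuller (hℓ i 1) (hℓ i 2)
  rw [Finset.card_univ, Fintype.card_fin, mul_comm] at h
  convert h using 1
  funext x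
  simp [ellProd]

lemma add_smul_ellProd_mem_polyFinset_iff (v : Fin d → Pt r) (c : Fin d → F3) (a : F3) (f : Fn r) :
    f + a • ellProd v c ∈ polyFinset r (2 * d) ↔ f ∈ polyFinset r (2 * d) := by
  rw [mem_polyFinset, mem_polyFinset]
  exact Submodule.add_mem_iff_left _ (Submodule.smul_mem _ a (ellProd_mem_reedMuller v c))

lemma LIset_nonempty (h : d ≤ r) : (LIset r d).Nonempty :=
  ⟨_, Finset.mem_filter.2 ⟨Finset.mem_univ _, (Pi.basisFun F3 (Fin r)).linearIndependent.comp
    (Fin.castLE h) (Fin.castLE_injective h)⟩⟩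

lemma eq_neg_of_ellProd_apply_ne_zero {v : Fin d → Pt r} {c : Fin d → F3} {x : Pt r}
    (h : ellProd v c x ≠ 0) : c = fun i => -∑ j, v i j * x j := by
  have hF3 (y : F3) : (y - 1) * (y - 2) ≠ 0 → y = 0 := by revert y; decide
  exact funext fun i => eq_neg_of_add_eq_zero_right
    (hF3 _ (Finset.prod_ne_zero_iff.1 h i (Finset.mem_univ i)))

lemma card_filter_dual_ellProd_ne_zero_le {φ : Dual F3 (Fn r)} {V : Finset (Pt r)}
    (hV : reedMuller F3 (Fin r) (2 * d) ⊓ vanishing F3 V ≤ LinearMap.ker φ) :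
    ((ellParams r d).filter
      fun vc => φ (ellProd vc.1 vc.2) ≠ 0).card ≤ V.card * (LIset r d).card := by
  let S (x : Pt r) := (ellParams r d).filter
    fun vc => ellProd vc.1 vc.2 x ≠ 0
  have hcover : (ellParams r d).filter
      (fun vc => φ (ellProd vc.1 vc.2) ≠ 0) ⊆ V.biUnion S := fun vc hvc => by
    rw [Finset.mem_filter] at hvc
    obtain ⟨x, hxV, hx⟩ : ∃ x ∈ V, ellProd vc.1 vc.2 x ≠ 0 := by
      by_contra! h
      exact hvc.2 (hV ⟨ellProd_mem_reedMuller _ _, mem_vanishing.2 h⟩)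
    exact Finset.mem_biUnion.2 ⟨x, hxV, Finset.mem_filter.2 ⟨hvc.1, hx⟩⟩
  refine (Finset.card_le_card hcover).trans (Finset.card_biUnion_le_card_mul _ _ _ fun x _ => ?_)
  refine Finset.card_le_card_of_injOn Prod.fst
    (fun vc hvc => (Finset.mem_product.1 (Finset.mem_filter.1 hvc).1).1) fun vc hvc vc' hvc' h => ?_
  refine Prod.ext h ?_
  rw [eq_neg_of_ellProd_apply_ne_zero (Finset.mem_filter.1 hvc).2,
    eq_neg_of_ellProd_apply_ne_zero (Finset.mem_filter.1 hvc').2, h]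

lemma one_sub_norm_eigenvalueS_le (hdr : d ≤ r) {ψ : AddChar F3 ℂ}
    (hψ : ψ.IsPrimitive) {χ : AddChar (Fn r) ℂ} {φ : Dual F3 (Fn r)} (hχ : ∀ f, χ f = ψ (φ f))
    {V : Finset (Pt r)} (hV : reedMuller F3 (Fin r) (2 * d) ⊓ vanishing F3 V ≤ LinearMap.ker φ) :
    1 - ‖eigenvalueS r d χ‖ ≤ V.card / 3 ^ d := by
  rw [eigenvalueS, translationEigenvalue_smul hψ hχ _ fun vc : (Fin d → Pt r) × (Fin d → F3) =>
    ellProd vc.1 vc.2, norm_div, Complex.norm_natCast, Complex.norm_natCast]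
  have hL : (0 : ℝ) < (LIset r d).card := Nat.cast_pos.2 (LIset_nonempty hdr).card_pos
  have hcard : ((ellParams r d).card : ℝ) = (LIset r d).card * 3 ^ d := by
    exact_mod_cast card_ellParams r d
  have hsplit : (((ellParams r d).filter fun vc => φ (ellProd vc.1 vc.2) = 0).card +
      ((ellParams r d).filter fun vc => φ (ellProd vc.1 vc.2) ≠ 0).card : ℝ) =
      (ellParams r d).card := by
    exact_mod_cast Finset.card_filter_add_card_filter_not _
  have hbad : (((ellParams r d).filter fun vc => φ (ellProd vc.1 vc.2) ≠ 0).card : ℝ) ≤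
      V.card * (LIset r d).card := by
    exact_mod_cast card_filter_dual_ellProd_ne_zero_le hV
  calc 1 - (((ellParams r d).filter fun vc => φ (ellProd vc.1 vc.2) = 0).card : ℝ) /
        (ellParams r d).card
      = ((ellParams r d).filter fun vc => φ (ellProd vc.1 vc.2) ≠ 0).card /
          ((LIset r d).card * 3 ^ d) := by
        rw [← hcard, eq_div_iff (by rw [hcard]; positivity), sub_mul,
          div_mul_cancel₀ _ (by rw [hcard]; positivity), one_mul, ← hsplit, add_sub_cancel_left]
    _ ≤ V.card * (LIset r d).card / ((LIset r d).card * 3 ^ d) := by gcongr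
    _ = V.card / 3 ^ d := by
        rw [mul_comm, mul_div_mul_left _ _ hL.ne']

end CayleyS

section EigenvalueBound

open Module

variable {r d : ℕ} {ψ : AddChar F3 ℂ} {χ : AddChar (Fn r) ℂ} {φ : Dual F3 (Fn r)}

lemma norm_eigenvalueT_mul_hankelRank_le (hd : 1 ≤ d) (hψ : ψ.IsPrimitive)
    (hχ : ∀ f, χ f = ψ (φ f)) (hR : hankelRank φ d d ≤ 2 * d) :
    ‖eigenvalueT r d χ‖ * hankelRank φ d d ≤ d := by
  set R : ℝ := (hankelRank φ d d : ℝ)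
  have hd' : (1 : ℝ) ≤ d := by exact_mod_cast hd
  have hR' : R ≤ 2 * d := (Nat.cast_le.2 hR).trans_eq (by push_cast; rfl)
  have hsq : R * R ≤ (1 + R * 2) * d := by nlinarith [(Nat.cast_nonneg _ : 0 ≤ R)]
  have hbernoulli : 1 + R * 2 ≤ 3 ^ hankelRank φ d d :=
    (one_add_mul_le_pow (by norm_num) _).trans_eq (by norm_num)
  refine le_of_sq_le_sq ?_ (Nat.cast_nonneg d)
  calc (‖eigenvalueT r d χ‖ * R) ^ 2 = ‖eigenvalueT r d χ‖ ^ 2 * (R * R) := by ring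
    _ ≤ ‖eigenvalueT r d χ‖ ^ 2 * ((1 + R * 2) * d) :=
        mul_le_mul_of_nonneg_left hsq (sq_nonneg _)
    _ ≤ ‖eigenvalueT r d χ‖ ^ 2 * 3 ^ hankelRank φ d d * d := by
        rw [← mul_assoc]
        gcongr
    _ ≤ 1 * d := by
        gcongr
        exact norm_eigenvalueT_sq_mul_le hψ hχ d
    _ ≤ (d : ℝ) ^ 2 := by nlinarith

lemma norm_eigenvalueT_mul_three_pow_le {k : ℕ} (hψ : ψ.IsPrimitive) (hχ : ∀ f, χ f = ψ (φ f))
    (hR : 2 * d ≤ hankelRank φ d d + 2 * k) (hd : 3 ^ k ≤ d) :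
    ‖eigenvalueT r d χ‖ * 3 ^ d ≤ d := by
  have hd' : (3 : ℝ) ^ k ≤ d := by exact_mod_cast hd
  refine (le_of_sq_le_sq ?_ (by positivity)).trans hd'
  calc (‖eigenvalueT r d χ‖ * 3 ^ d) ^ 2 = ‖eigenvalueT r d χ‖ ^ 2 * 3 ^ (2 * d) := by ring
    _ ≤ ‖eigenvalueT r d χ‖ ^ 2 * 3 ^ (hankelRank φ d d + 2 * k) := by
        gcongr
        norm_num
    _ = ‖eigenvalueT r d χ‖ ^ 2 * 3 ^ hankelRank φ d d * (3 ^ k) ^ 2 := by ring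
    _ ≤ 1 * (3 ^ k) ^ 2 := by
        gcongr
        exact norm_eigenvalueT_sq_mul_le hψ hχ d
    _ = (3 ^ k) ^ 2 := one_mul _

lemma one_sub_norm_eigenvalueS_le_hankelRank {k : ℕ} (hk : 1200 ≤ k) (hdr : d ≤ r)
    (hψ : ψ.IsPrimitive) (hχ : ∀ f, χ f = ψ (φ f)) (hR : hankelRank φ d d + 2 * k < 2 * d) :
    1 - ‖eigenvalueS r d χ‖ ≤ hankelRank φ d d / 3 ^ d := by
  obtain ⟨V, hcard, hV⟩ := exists_reedMuller_inf_vanishing_le_ker (φ := φ) (m := 2 * d)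
    (by rw [balancedRank_two_mul, ZMod.card]; omega)
  rw [balancedRank_two_mul] at hcard
  refine (one_sub_norm_eigenvalueS_le hdr hψ hχ hV).trans ?_
  gcongr

lemma norm_eigenvalueT_mul_one_sub_le {k : ℕ} (hk : 1200 ≤ k) (hd : 3 ^ k ≤ d) (hdr : d ≤ r)
    (t : ℕ) (χ : AddChar (Fn r) ℂ) :
    ‖eigenvalueT r d χ‖ * |1 - ‖eigenvalueS r d χ‖ ^ (2 * t)| ≤ 2 * d * t / 3 ^ d := by
  have hψ : (ZMod.stdAddChar (N := 3)).IsPrimitive := ZMod.isPrimitive_stdAddChar 3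
  obtain ⟨φ, hχ⟩ := exists_dual_apply_eq hψ χ
  have hl1 : ‖eigenvalueS r d χ‖ ≤ 1 := norm_translationEigenvalue_le_one _ _ _
  set m := ‖eigenvalueT r d χ‖
  set l := ‖eigenvalueS r d χ‖
  have hl0 : 0 ≤ l := norm_nonneg _
  rw [abs_of_nonneg (sub_nonneg.2 (pow_le_one₀ hl0 hl1))]
  rcases lt_or_ge (hankelRank φ d d + 2 * k) (2 * d) with hlow | hhigh
  · have hbernoulli : 1 - l ^ (2 * t) ≤ 2 * t * (1 - l) := by
      have h := one_add_mul_sub_le_pow (by linarith : -1 ≤ l) (2 * t)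
      push_cast at h
      linarith
    calc m * (1 - l ^ (2 * t)) ≤ m * (2 * t * (hankelRank φ d d / 3 ^ d)) := by
          gcongr
          refine hbernoulli.trans ?_
          gcongr
          exact one_sub_norm_eigenvalueS_le_hankelRank hk hdr hψ hχ hlow
      _ = 2 * (m * hankelRank φ d d) * t / 3 ^ d := by ring
      _ ≤ 2 * d * t / 3 ^ d := by
          gcongr
          exact norm_eigenvalueT_mul_hankelRank_le ((Nat.one_le_pow' _ _).trans hd) hψ hχ
            ((Nat.le_add_right _ _).trans hlow.le)
  · have hmd : m * 3 ^ d ≤ d := norm_eigenvalueT_mul_three_pow_le hψ hχ hhigh hd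
    have hlt : 1 - l ^ (2 * t) ≤ t := by
      obtain rfl | ht := t.eq_zero_or_pos
      · simp
      · exact (sub_le_self _ (by positivity)).trans (Nat.one_le_cast.2 ht)
    rw [le_div_iff₀ (by positivity)]
    calc m * (1 - l ^ (2 * t)) * 3 ^ d ≤ m * t * 3 ^ d := by gcongr
      _ = m * 3 ^ d * t := by ring
      _ ≤ 2 * d * t := by
          refine mul_le_mul_of_nonneg_right ?_ t.cast_nonneg
          linarith [(Nat.cast_nonneg d : (0 : ℝ) ≤ d)]

end EigenvalueBound

end ReedMuller

open ReedMuller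

theorem stmt18_general {r d : ℕ} (hd : 3 ^ 1200 ≤ d) (hdr : d ≤ r) (t : ℕ) {A B : Fn r → ℝ}
    (hA : ∀ f ∈ polyFinset r (2 * d), |A f| ≤ 1) (hB : ∀ f ∈ polyFinset r (2 * d), |B f| ≤ 1) :
    |innerP r d A (Trd r d B) -
        innerP r d ((Sop r d)^[t] A) (Trd r d ((Sop r d)^[t] B))|
      ≤ 2 * (d : ℝ) * (t : ℝ) / 3 ^ d := by
  have hcard : (0 : ℝ) < (polyFinset r (2 * d)).card := Nat.cast_pos.2
    (Finset.card_pos.2 ⟨0, mem_polyFinset.2 (zero_mem _)⟩)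
  rw [innerP, innerP, ← sub_div, abs_div, abs_of_pos hcard, div_le_iff₀ hcard,
    Trd_eq_translationAverage, Sop_eq_translationAverage]
  exact abs_sum_sub_sum_iterate_le
    (fun pa hpa => add_shift_mem_polyFinset_iff (Finset.mem_product.1 hpa).1 pa.2)
    (fun vca _ => add_smul_ellProd_mem_polyFinset_iff vca.1.1 vca.1.2 vca.2) hA hB
    (norm_eigenvalueT_mul_one_sub_le le_rfl hd hdr t)

/-- Noising lemma (Lemma 4.7): there is `d₀` such that for `d₀ ≤ d ≤ r`, `t ≥ 1`, and
`A, B : P_{r,2d} → [0,1]`, with `A' := S_{r,d}^t A`, `B' := S_{r,d}^t B`,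
`|⟨A, T_{r,d}B⟩ − ⟨A', T_{r,d}B'⟩| ≤ 2dt/3^d`. -/
theorem stmt18 :
    ∃ d₀ : ℕ, ∀ r d t : ℕ, d₀ ≤ d → d ≤ r → 1 ≤ t →
      ∀ A B : Fn r → ℝ,
        (∀ f ∈ polyFinset r (2 * d), 0 ≤ A f ∧ A f ≤ 1) →
        (∀ f ∈ polyFinset r (2 * d), 0 ≤ B f ∧ B f ≤ 1) →
        |innerP r d A (Trd r d B) -
            innerP r d ((Sop r d)^[t] A) (Trd r d ((Sop r d)^[t] B))|
          ≤ 2 * (d : ℝ) * (t : ℝ) / 3 ^ d :=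
  ⟨3 ^ 1200, fun _ _ t hd hdr _ _ _ hA hB => stmt18_general hd hdr t
    (fun f hf => (abs_of_nonneg (hA f hf).1).trans_le (hA f hf).2)
    fun f hf => (abs_of_nonneg (hB f hf).1).trans_le (hB f hf).2⟩
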